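/- arXiv:1407.3927 — 4 statements merged into one kernel-verified Lean document; each statement's English description precedes it below -/
import Mathlib

section
/- Let d ≥ 1, let h = (h₁,…,h_d) satisfy 0 < h₁ ≤ ⋯ ≤ h_d ≤ 1, and let ε > 0. Then κ(h, ε) > 2ε / (M₂(h) + 2ε²), where M₂(h) := sup { sup_{t ≥ 0} |p''(t)| : p ∈ P_h, sup_{t ≥ 0} |p(t)| ≤ 1 } is the sharp constant in the second-order Markov–Bernstein inequality for P_h. -/
/-- The sup of `|p|` over the half-line `[0, ∞)`. -/
noncomputable def supAbs (p : ℝ → ℝ) : ℝ :=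
  sSup ((fun t => |p t|) '' Set.Ici (0 : ℝ))

/-- The space `P_h` of exponential polynomials with exponents `h₁ ≤ ⋯ ≤ h_d`:
the span of the functions `t^m * exp (-h i * t)`, where `m` is the number of
indices `j < i` with `h j = h i`. -/
def expPoly (d : ℕ) (h : Fin d → ℝ) : Set (ℝ → ℝ) :=
  {p | ∃ c : Fin d → ℝ, ∀ t : ℝ,
      p t = ∑ i : Fin d,
        c i * t ^ (Nat.card {j : Fin d // j < i ∧ h j = h i}) * Real.exp (-(h i) * t)}

/-- `κ(h, ε)`: the infimum of `(1 − p(0)) / (p'(0) − ε p(0))` over all `p ∈ P_h`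
with `sup_{t ≥ 0} |p(t)| ≤ 1` and `p'(0) > ε p(0)`. -/
noncomputable def kappa (d : ℕ) (h : Fin d → ℝ) (ε : ℝ) : ℝ :=
  sInf {y : ℝ | ∃ p ∈ expPoly d h, supAbs p ≤ 1 ∧ ε * p 0 < deriv p 0 ∧
      y = (1 - p 0) / (deriv p 0 - ε * p 0)}

/-- `M₂(h)`: the sharp constant in the second-order Markov–Bernstein inequality
for `P_h`, i.e. `sup { sup_{t≥0} |p''| : p ∈ P_h, sup_{t≥0} |p| ≤ 1 }`. -/
noncomputable def M2 (d : ℕ) (h : Fin d → ℝ) : ℝ :=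
  sSup {M : ℝ | ∃ p ∈ expPoly d h, supAbs p ≤ 1 ∧ M = supAbs (iteratedDeriv 2 p)}

namespace KLB

open Polynomial Filter Topology

noncomputable def tm (q : ℝ[X]) (a : ℝ) (t : ℝ) : ℝ := q.eval t * Real.exp (-a * t)

noncomputable def S {d : ℕ} (Q : Fin d → ℝ[X]) (h : Fin d → ℝ) (c : Fin d → ℝ) (t : ℝ) : ℝ :=
  ∑ i, c i * tm (Q i) (h i) t

noncomputable def dQ {d : ℕ} (h : Fin d → ℝ) (Q : Fin d → ℝ[X]) (i : Fin d) : ℝ[X] :=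
  derivative (Q i) - C (h i) * Q i

theorem tm_bdd (q : ℝ[X]) (a : ℝ) (ha : 0 < a) : ∃ B, ∀ t, 0 ≤ t → |tm q a t| ≤ B := by
  have hcont : Continuous (tm q a) := by unfold tm; fun_prop
  have hlim : Tendsto (tm q a) atTop (𝓝 0) := by
    have h1 := (Polynomial.tendsto_div_exp_atTop (q.comp (C a⁻¹ * X))).comp
      (tendsto_id.const_mul_atTop ha)
    refine h1.congr fun t => ?_
    simp only [Function.comp, id, tm, eval_comp, eval_mul, eval_C, eval_X]
    rw [inv_mul_cancel_left₀ ha.ne', div_eq_mul_inv, ← Real.exp_neg, neg_mul]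
  have hl2 := hlim.abs
  rw [abs_zero] at hl2
  have hev := hl2.eventually (ge_mem_nhds (zero_lt_one (α := ℝ)))
  obtain ⟨N, hN⟩ := eventually_atTop.1 hev
  obtain ⟨B, hB⟩ := (isCompact_Icc (a := (0:ℝ)) (b := N)).exists_bound_of_continuousOn
    hcont.continuousOn
  refine ⟨max B 1, fun t ht => ?_⟩
  rcases le_total t N with h1 | h1
  · exact (hB t ⟨ht, h1⟩).trans (le_max_left _ _)
  · exact (hN t h1).trans (le_max_right _ _)

theorem tm_deriv (q : ℝ[X]) (a t : ℝ) :
    HasDerivAt (tm q a) (tm (derivative q - C a * q) a t) t := by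
  have h1 := q.hasDerivAt t
  have h2 : HasDerivAt (fun t => Real.exp (-a * t)) (Real.exp (-a * t) * (-a * 1)) t :=
    ((hasDerivAt_id t).const_mul (-a)).exp
  refine (h1.mul h2).congr_deriv ?_
  simp only [tm, eval_sub, eval_mul, eval_C]; ring

theorem tm_analytic (q : ℝ[X]) (a : ℝ) : AnalyticOnNhd ℝ (tm q a) Set.univ := by
  intro t _
  have h1 : AnalyticAt ℝ (fun t => q.eval t) t := by
    simpa using (AnalyticAt.aeval_polynomial (analyticAt_id (𝕜 := ℝ) (z := t)) q)
  have h2 : AnalyticAt ℝ (fun t : ℝ => Real.exp (-a * t)) t := by fun_prop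
  exact h1.mul h2

variable {d : ℕ}

theorem S_deriv (Q : Fin d → ℝ[X]) (h c : Fin d → ℝ) (t : ℝ) :
    HasDerivAt (S Q h c) (S (dQ h Q) h c t) t := by
  unfold S
  exact HasDerivAt.fun_sum fun i _ => (tm_deriv (Q i) (h i) t).const_mul (c i)

theorem S_deriv_eq (Q : Fin d → ℝ[X]) (h c : Fin d → ℝ) :
    deriv (S Q h c) = S (dQ h Q) h c := funext fun t => (S_deriv Q h c t).deriv

theorem S_analytic (Q : Fin d → ℝ[X]) (h c : Fin d → ℝ) :
    AnalyticOnNhd ℝ (S Q h c) Set.univ := by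
  unfold S
  exact Finset.analyticOnNhd_fun_sum _ fun i _ => analyticOnNhd_const.mul (tm_analytic (Q i) (h i))

theorem S_bdd (Q : Fin d → ℝ[X]) (h : Fin d → ℝ) (hpos : ∀ i, 0 < h i) :
    ∃ B, 0 ≤ B ∧ ∀ c : Fin d → ℝ, ∀ t, 0 ≤ t → |S Q h c t| ≤ B * ‖c‖ := by
  choose B hB using fun i => tm_bdd (Q i) (h i) (hpos i)
  have hB0 : ∀ i, 0 ≤ B i := fun i => (abs_nonneg _).trans (hB i 0 le_rfl)
  refine ⟨∑ i, B i, Finset.sum_nonneg fun i _ => hB0 i, fun c t ht => ?_⟩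
  unfold S
  refine (Finset.abs_sum_le_sum_abs _ _).trans ?_
  rw [Finset.sum_mul]
  refine Finset.sum_le_sum fun i _ => ?_
  rw [abs_mul, mul_comm]
  exact mul_le_mul (hB i t ht) (norm_le_pi_norm c i) (abs_nonneg _) (hB0 i)

theorem S_cont (Q : Fin d → ℝ[X]) (h : Fin d → ℝ) (t : ℝ) : Continuous fun c => S Q h c t := by
  unfold S; fun_prop

noncomputable def L (Q : Fin d → ℝ[X]) (h : Fin d → ℝ) (hpos : ∀ i, 0 < h i) :
    (Fin d → ℝ) →ₗ[ℝ] BoundedContinuousFunction (Set.Ici (0:ℝ)) ℝ where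
  toFun c := BoundedContinuousFunction.ofNormedAddCommGroup (fun t : Set.Ici (0:ℝ) => S Q h c t)
    ((continuousOn_univ.1 (S_analytic Q h c).continuousOn).comp continuous_subtype_val)
    ((S_bdd Q h hpos).choose * ‖c‖) (fun t => (S_bdd Q h hpos).choose_spec.2 c t t.2)
  map_add' a b := by
    ext t
    simp [S, add_mul, Finset.sum_add_distrib]
  map_smul' a b := by
    ext t
    simp [S, Finset.mul_sum, mul_assoc]

theorem L_apply (Q : Fin d → ℝ[X]) (h : Fin d → ℝ) (hpos : ∀ i, 0 < h i) (c) (t : Set.Ici (0:ℝ)) :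
    L Q h hpos c t = S Q h c t := rfl

theorem gen {V : Type*} [NormedAddCommGroup V] [NormedSpace ℝ V] (A : (Fin d → ℝ) →ₗ[ℝ] V) :
    ∃ K : Set (Fin d → ℝ), IsCompact K ∧ (∀ c ∈ K, ‖A c‖ ≤ 1) ∧
      ∀ c, ‖A c‖ ≤ 1 → ∃ c' ∈ K, A c' = A c := by
  obtain ⟨s, hs⟩ := A.rangeRestrict.exists_rightInverse_of_surjective A.range_rangeRestrict
  have hs' : ∀ y, A (s y) = y := fun y =>
    congrArg Subtype.val (LinearMap.congr_fun hs y)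
  have : ProperSpace (LinearMap.range A) := FiniteDimensional.proper ℝ _
  refine ⟨s '' Metric.closedBall 0 1, (isCompact_closedBall _ _).image
    (LinearMap.continuous_of_finiteDimensional s), ?_, ?_⟩
  · rintro _ ⟨y, hy, rfl⟩
    rw [mem_closedBall_zero_iff] at hy
    rw [hs']
    exact hy
  · intro c hc
    refine ⟨s ⟨A c, ⟨c, rfl⟩⟩, ⟨_, ?_, rfl⟩, hs' _⟩
    rw [mem_closedBall_zero_iff]
    exact hc

theorem compact_rep (Q : Fin d → ℝ[X]) (h : Fin d → ℝ) (hpos : ∀ i, 0 < h i) :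
    ∃ K : Set (Fin d → ℝ), IsCompact K ∧ (∀ c ∈ K, ∀ t, 0 ≤ t → |S Q h c t| ≤ 1) ∧
      ∀ c, (∀ t, 0 ≤ t → |S Q h c t| ≤ 1) → ∃ c' ∈ K, S Q h c = S Q h c' := by
  obtain ⟨K, hK, hK1, hK2⟩ := gen (L Q h hpos)
  refine ⟨K, hK, fun c hc t ht => ?_, fun c hc => ?_⟩
  · exact ((L Q h hpos c).norm_coe_le_norm ⟨t, ht⟩).trans (hK1 c hc)
  · obtain ⟨c', hc', e⟩ := hK2 c
      ((BoundedContinuousFunction.norm_le zero_le_one).2 fun t => hc t t.2)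
    refine ⟨c', hc', ?_⟩
    refine AnalyticOnNhd.eq_of_eventuallyEq (S_analytic Q h c) (S_analytic Q h _) (z₀ := 1) ?_
    filter_upwards [lt_mem_nhds (zero_lt_one (α := ℝ))] with t ht
    exact (DFunLike.congr_fun e (⟨t, ht.le⟩ : Set.Ici (0:ℝ))).symm

theorem supAbs_le {p : ℝ → ℝ} {B : ℝ} (hB : ∀ t, 0 ≤ t → |p t| ≤ B) : supAbs p ≤ B := by
  apply csSup_le (Set.Nonempty.image _ ⟨0, Set.self_mem_Ici⟩)
  rintro _ ⟨t, ht, rfl⟩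
  exact hB t ht

theorem le_supAbs {p : ℝ → ℝ} {B : ℝ} (hB : ∀ t, 0 ≤ t → |p t| ≤ B) (t : ℝ) (ht : 0 ≤ t) :
    |p t| ≤ supAbs p := by
  refine le_csSup ⟨B, ?_⟩ ⟨t, ht, rfl⟩
  rintro _ ⟨t, ht, rfl⟩
  exact hB t ht

theorem strict (p p1 p2 : ℝ → ℝ) (han : AnalyticOnNhd ℝ p Set.univ)
    (h1 : ∀ t, HasDerivAt p (p1 t) t) (h2 : ∀ t, HasDerivAt p1 (p2 t) t)
    (hp : ∀ t, 0 ≤ t → |p t| ≤ 1) (M : ℝ) (hM : ∀ t, 0 ≤ t → |p2 t| ≤ M) (ε : ℝ) (hε : 0 < ε) :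
    0 < (1 - p 0) * M + 2 * ε ^ 2 - 2 * ε * p1 0 := by
  have hM0 : 0 ≤ M := (abs_nonneg _).trans (hM 0 le_rfl)
  have ha := abs_le.1 (hp 0 le_rfl)
  rcases le_or_gt (p1 0) 0 with hb | hb
  · have : 0 ≤ (1 - p 0) * M := mul_nonneg (by linarith) hM0
    have : 0 ≤ ε * (-p1 0) := mul_nonneg hε.le (by linarith)
    nlinarith [pow_pos hε 2]
  set a := p 0 with ha_def
  set b := p1 0 with hb_def
  let g : ℝ → ℝ := fun t => p t - (a + b * t - M * t ^ 2 / 2)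
  let g1 : ℝ → ℝ := fun t => p1 t - (b - M * t)
  have hg : ∀ t, HasDerivAt g (g1 t) t := fun t => by
    have h3 : HasDerivAt (fun t : ℝ => a + b * t - M * t ^ 2 / 2) (b - M * t) t := by
      have := (((hasDerivAt_id t).const_mul b).const_add a).sub
        ((((hasDerivAt_id t).pow 2).const_mul M).div_const 2)
      refine this.congr_deriv ?_
      simp; ring
    exact (h1 t).sub h3
  have hg1 : ∀ t, HasDerivAt g1 (p2 t + M) t := fun t => by
    have h3 : HasDerivAt (fun t : ℝ => b - M * t) (-M) t := by
      have := ((hasDerivAt_id t).const_mul M).const_sub b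
      refine this.congr_deriv ?_
      simp
    exact ((h2 t).sub h3).congr_deriv (by ring)
  have hg1m : MonotoneOn g1 (Set.Ici 0) := by
    refine monotoneOn_of_deriv_nonneg (convex_Ici 0)
      (fun t _ => (hg1 t).continuousAt.continuousWithinAt)
      (fun t _ => (hg1 t).differentiableAt.differentiableWithinAt) fun t ht => ?_
    rw [interior_Ici] at ht
    rw [(hg1 t).deriv]
    linarith [(abs_le.1 (hM t (le_of_lt ht))).1]
  have hg10 : g1 0 = 0 := by simp [g1, hb_def]
  have hg0 : g 0 = 0 := by simp [g, ha_def]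
  have hgm : MonotoneOn g (Set.Ici 0) := by
    refine monotoneOn_of_deriv_nonneg (convex_Ici 0)
      (fun t _ => (hg t).continuousAt.continuousWithinAt)
      (fun t _ => (hg t).differentiableAt.differentiableWithinAt) fun t ht => ?_
    rw [interior_Ici] at ht
    rw [(hg t).deriv, ← hg10]
    have ht' : (0:ℝ) ≤ t := le_of_lt ht
    exact hg1m Set.self_mem_Ici ht' ht'
  have hgnn : ∀ t, 0 ≤ t → 0 ≤ g t := fun t ht => by
    rw [← hg0]; exact hgm Set.self_mem_Ici ht ht
  have hMpos : 0 < M := by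
    rcases hM0.lt_or_eq with h | h
    · exact h
    exfalso
    have ht : 0 ≤ 3 / b := by positivity
    have h3 := hgnn _ ht
    have h4 := (abs_le.1 (hp _ ht)).2
    simp only [g, ← h] at h3
    have : b * (3 / b) = 3 := by field_simp
    rw [this] at h3
    linarith
  by_contra hF
  push Not at hF
  have hkey : (1 - a) * M ≤ b ^ 2 / 2 := by nlinarith [sq_nonneg (b - 2 * ε)]
  set t0 := b / M with ht0
  have ht0p : 0 < t0 := by positivity
  have hMt : M * t0 = b := by rw [ht0]; field_simp
  have hgt0 : g t0 ≤ 0 := by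
    have h4 := (abs_le.1 (hp _ ht0p.le)).2
    have : 1 - a ≤ b * t0 / 2 := by
      rw [← mul_le_mul_iff_left₀ hMpos]
      calc _ ≤ _ := hkey
        _ = _ := by rw [← hMt]; ring
    have e : M * t0 ^ 2 / 2 = b * t0 / 2 := by rw [← hMt]; ring
    simp only [g]
    rw [e]
    linarith
  have hpan : p = fun t : ℝ => a + b * t - M * t ^ 2 / 2 := by
    refine AnalyticOnNhd.eq_of_eventuallyEq han (fun t _ => by fun_prop) (z₀ := t0 / 2) ?_
    filter_upwards [Ioo_mem_nhds (half_pos ht0p) (half_lt_self ht0p)] with t ht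
    have h5 := hgnn t ht.1.le
    have h6 : g t ≤ g t0 := hgm ht.1.le ht0p.le ht.2.le
    have : g t = 0 := le_antisymm (h6.trans hgt0) h5
    simp only [g] at this
    linarith
  have hu : 0 < 1 / M := by positivity
  have hMu : M * (1 / M) = 1 := by field_simp
  set u := 1 / M
  have hT : 0 ≤ 2 * t0 + 3 * u + 3 := by positivity
  have h7 := (abs_le.1 (hp _ hT)).1
  rw [hpan] at h7
  simp only at h7
  have e : a + b * (2 * t0 + 3 * u + 3) - M * (2 * t0 + 3 * u + 3) ^ 2 / 2
    = a - (2 * t0 + 3 * u + 3) * (3 * (M * u) + 3 * M) / 2 := by rw [← hMt]; ring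
  rw [e, hMu] at h7
  have : 0 < t0 * M := by positivity
  nlinarith

theorem mem_iff (h : Fin d → ℝ) (p : ℝ → ℝ) : p ∈ expPoly d h ↔ ∃ c, p =
    S (fun i => X ^ (Nat.card {j : Fin d // j < i ∧ h j = h i})) h c := by
  simp only [expPoly, Set.mem_ofPred_eq, funext_iff, S, tm, eval_pow, eval_X, mul_assoc]

theorem main (hd : 1 ≤ d) (h : Fin d → ℝ)
    (hpos : ∀ i, 0 < h i) (ε : ℝ) (hε : 0 < ε) :
    2 * ε / (M2 d h + 2 * ε ^ 2) < kappa d h ε := by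
  set Q : Fin d → ℝ[X] := fun i => X ^ (Nat.card {j : Fin d // j < i ∧ h j = h i}) with hQ
  have hmem : ∀ p, p ∈ expPoly d h ↔ ∃ c, p = S Q h c := mem_iff h
  have hnorm : ∀ c, supAbs (S Q h c) ≤ 1 ↔ ∀ t, 0 ≤ t → |S Q h c t| ≤ 1 := fun c => by
    obtain ⟨B, -, hB⟩ := S_bdd Q h hpos
    exact ⟨fun h1 t ht => (le_supAbs (hB c) t ht).trans h1, supAbs_le⟩
  have hd2 : ∀ c, iteratedDeriv 2 (S Q h c) = S (dQ h (dQ h Q)) h c := fun c => by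
    rw [iteratedDeriv_succ, iteratedDeriv_one, S_deriv_eq, S_deriv_eq]
  obtain ⟨K, hK, hK1, hK2⟩ := compact_rep Q h hpos
  have hM : ∀ c ∈ K, ∀ t, 0 ≤ t → |S (dQ h (dQ h Q)) h c t| ≤ M2 d h := by
    intro c hc t ht
    obtain ⟨B, hB0, hB⟩ := S_bdd (dQ h (dQ h Q)) h hpos
    refine (le_supAbs (hB c) t ht).trans ?_
    obtain ⟨R, hR⟩ := hK.isBounded.exists_norm_le
    refine le_csSup ⟨B * R, ?_⟩ ⟨S Q h c, (hmem _).2 ⟨c, rfl⟩, (hnorm c).2 (hK1 c hc), ?_⟩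
    · rintro _ ⟨p, hp, hp1, rfl⟩
      obtain ⟨c, rfl⟩ := (hmem _).1 hp
      obtain ⟨c', hc', e⟩ := hK2 c ((hnorm c).1 hp1)
      rw [e, hd2]
      exact supAbs_le fun t ht => (hB c' t ht).trans (mul_le_mul_of_nonneg_left (hR c' hc') hB0)
    · rw [hd2]
  set M := M2 d h with hMdef
  have hF : ∀ c ∈ K, 0 < (1 - S Q h c 0) * M + 2 * ε ^ 2 - 2 * ε * S (dQ h Q) h c 0 := fun c hc =>
    strict _ _ _ (S_analytic Q h c) (S_deriv Q h c) (S_deriv (dQ h Q) h c) (hK1 c hc) M (hM c hc) ε hε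
  -- membership of a test function
  have hex : ∃ c, (∀ t, 0 ≤ t → |S Q h c t| ≤ 1) ∧ ε * S Q h c 0 < S (dQ h Q) h c 0 := by
    let i0 : Fin d := ⟨0, hd⟩
    have hQ0 : Q i0 = 1 := by
      have : IsEmpty {j : Fin d // j < i0 ∧ h j = h i0} :=
        ⟨fun j => absurd j.2.1 (by simp [i0, Fin.lt_def])⟩
      simp [hQ]
    have e : ∀ t, S Q h (Pi.single i0 (-1)) t = - Real.exp (-(h i0) * t) := fun t => by
      unfold S
      rw [Finset.sum_eq_single i0]
      · simp [tm, hQ0]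
      · intro j _ hj; simp [hj]
      · simp
    have e1 : S (dQ h Q) h (Pi.single i0 (-1)) 0 = h i0 := by
      unfold S
      rw [Finset.sum_eq_single i0]
      · simp [tm, dQ, hQ0]
      · intro j _ hj; simp [hj]
      · simp
    refine ⟨Pi.single i0 (-1), fun t ht => ?_, ?_⟩
    · rw [e, abs_neg, abs_of_pos (Real.exp_pos _), Real.exp_le_one_iff]
      nlinarith [hpos i0]
    · rw [e, e1]
      simp
      linarith [hpos i0]
  have hKne : K.Nonempty := by
    obtain ⟨c, hc, -⟩ := hex
    obtain ⟨c', hc', -⟩ := hK2 c hc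
    exact ⟨c', hc'⟩
  have hc0 := S_cont Q h 0
  have hc1 := S_cont (dQ h Q) h 0
  have hM0 : 0 ≤ M := by
    obtain ⟨c, hc⟩ := hKne
    exact (abs_nonneg _).trans (hM c hc 0 le_rfl)
  obtain ⟨x, hx, hxmin⟩ := hK.exists_isMinOn hKne
    (f := fun c => (1 - S Q h c 0) * M + 2 * ε ^ 2 - 2 * ε * S (dQ h Q) h c 0)
    (by fun_prop)
  obtain ⟨B, hB⟩ := hK.exists_bound_of_continuousOn
    (f := fun c => S (dQ h Q) h c 0 - ε * S Q h c 0) (by fun_prop)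
  set δ := (1 - S Q h x 0) * M + 2 * ε ^ 2 - 2 * ε * S (dQ h Q) h x 0 with hδ
  have hδ0 : 0 < δ := hF x hx
  have hD : 0 < M + 2 * ε ^ 2 := by positivity
  have hB1 : 0 < max B 1 := by positivity
  have : 2 * ε / (M + 2 * ε ^ 2) + δ / ((M + 2 * ε ^ 2) * max B 1) ≤ kappa d h ε := by
    apply le_csInf
    · obtain ⟨c, hc, hc'⟩ := hex
      exact ⟨_, S Q h c, (hmem _).2 ⟨c, rfl⟩, (hnorm c).2 hc, by rwa [S_deriv_eq], rfl⟩
    · rintro _ ⟨p, hp, hp1, hp2, rfl⟩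
      obtain ⟨c, rfl⟩ := (hmem _).1 hp
      obtain ⟨c', hc', e⟩ := hK2 c ((hnorm c).1 hp1)
      rw [e, S_deriv_eq] at hp2 ⊢
      have h1 : δ ≤ _ := hxmin hc'
      have h2 := (le_abs_self _).trans ((hB c' hc').trans (le_max_left B 1))
      simp only at h1 h2
      generalize S Q h c' 0 = a at *
      generalize S (dQ h Q) h c' 0 = b at *
      have h3 : 0 < b - ε * a := by linarith
      calc _ ≤ 2 * ε / (M + 2 * ε ^ 2) + δ / ((M + 2 * ε ^ 2) * (b - ε * a)) := by gcongr
        _ = (2 * ε * (b - ε * a) + δ) / ((M + 2 * ε ^ 2) * (b - ε * a)) := by field_simp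
        _ ≤ ((1 - a) * (M + 2 * ε ^ 2)) / ((M + 2 * ε ^ 2) * (b - ε * a)) := by
          gcongr
          linarith
        _ = _ := by field_simp
  have : 0 < δ / ((M + 2 * ε ^ 2) * max B 1) := by positivity
  linarith

end KLB

/-- For `0 < h₁ ≤ ⋯ ≤ h_d ≤ 1` and `ε > 0`, `κ(h, ε) > 2ε / (M₂(h) + 2ε²)`. -/
theorem kappa_lower_bound (d : ℕ) (hd : 1 ≤ d) (h : Fin d → ℝ)
    (hmono : Monotone h) (hpos : ∀ i, 0 < h i) (hone : ∀ i, h i ≤ 1)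
    (ε : ℝ) (hε : 0 < ε) :
    2 * ε / (M2 d h + 2 * ε ^ 2) < kappa d h ε :=
  KLB.main hd h hpos ε hε
end

section
/- Let d ≥ 2, let h = (h₁,…,h_d) satisfy 0 < h₁ ≤ ⋯ ≤ h_d ≤ 1, and let ε > 0. Suppose T ∈ P_h satisfies sup_{t ≥ 0} |T(t)| = 1 and there exist points 0 = ν₁ < ν₂ < ⋯ < ν_d such that T(νₖ) = (−1)ᵏ for k = 1,…,d (that is, T is the h-Chebyshev polynomial with alternance points νₖ). Then κ(h, ε) = inf { (1 − T(t)) / (T'(t) − ε·T(t)) : t ∈ [0, ν₂] and T'(t) > ε·T(t) }. -/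
def AnnL : List ℝ → (ℝ → ℝ) → Prop
  | [], f => ∀ t, f t = 0
  | a :: l, f => Differentiable ℝ f ∧ AnnL l (fun t => deriv f t + a * f t)

theorem AnnL.zero (l : List ℝ) : AnnL l (fun _ => 0) := by
  induction l with
  | nil => intro t; rfl
  | cons a l ih =>
    refine ⟨differentiable_const _, ?_⟩
    simpa using ih

theorem AnnL.add (l : List ℝ) : ∀ {f g : ℝ → ℝ}, AnnL l f → AnnL l g →
    AnnL l (fun t => f t + g t) := by
  induction l with
  | nil => intro f g hf hg t; simp [hf t, hg t]
  | cons a l ih =>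
    intro f g hf hg
    refine ⟨hf.1.add hg.1, ?_⟩
    have := ih hf.2 hg.2
    convert this using 2 with t
    rw [deriv_fun_add (hf.1 t) (hg.1 t)]
    ring

theorem AnnL.smul (l : List ℝ) (c : ℝ) : ∀ {f : ℝ → ℝ}, AnnL l f →
    AnnL l (fun t => c * f t) := by
  induction l with
  | nil => intro f hf t; simp [hf t]
  | cons a l ih =>
    intro f hf
    refine ⟨hf.1.const_mul c, ?_⟩
    have := ih hf.2
    convert this using 2 with t
    rw [deriv_const_mul c (hf.1 t)]
    ring

theorem AnnL.shift (l : List ℝ) (s : ℝ) : ∀ {f : ℝ → ℝ}, AnnL l f →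
    AnnL l (fun t => f (t + s)) := by
  induction l with
  | nil => intro f hf t; exact hf _
  | cons a l ih =>
    intro f hf
    refine ⟨hf.1.comp (differentiable_id.add_const s), ?_⟩
    have := ih hf.2
    convert this using 2 with t
    rw [deriv_comp_add_const]

theorem AnnL.sum (l : List ℝ) {ι : Type} (s : Finset ι) (f : ι → ℝ → ℝ)
    (hf : ∀ i ∈ s, AnnL l (f i)) : AnnL l (fun t => ∑ i ∈ s, f i t) := by
  classical
  induction s using Finset.induction_on with
  | empty => simpa using AnnL.zero l
  | insert a s ha ih =>
    simp only [Finset.sum_insert ha]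
    exact AnnL.add l (hf a (by simp)) (ih fun i hi => hf i (by simp [hi]))

theorem AnnL.eq_zero (l : List ℝ) : ∀ {f : ℝ → ℝ} (_ : AnnL l f) (z : ℕ → ℝ)
    (_ : ∀ i, i < l.length → f (z i) = 0) (_ : ∀ i, i + 1 < l.length → z i < z (i+1)),
    ∀ t, f t = 0 := by
  induction l with
  | nil => intro f hf z _ _; exact hf
  | cons a l ih =>
    intro f hf z hz hzm
    have hd : ∀ t, HasDerivAt (fun t => Real.exp (a * t) * f t)
        (Real.exp (a * t) * (deriv f t + a * f t)) t := by
      intro t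
      have h1 : HasDerivAt (fun t => Real.exp (a * t)) (Real.exp (a * t) * a) t := by
        simpa using ((hasDerivAt_id t).const_mul a).exp
      have h2 := h1.mul (hf.1 t).hasDerivAt
      exact h2.congr_deriv (by ring)
    have key : ∀ i, ∃ w, i < l.length → (z i < w ∧ w < z (i+1) ∧ deriv f w + a * f w = 0) := by
      intro i
      by_cases hi : i < l.length
      · have h1 := hz i (by simp; omega)
        have h2 := hz (i+1) (by simp; omega)
        have h3 := hzm i (by simp; omega)
        obtain ⟨w, hw, hw0⟩ := exists_hasDerivAt_eq_zero h3
          (fun t _ => (hd t).continuousAt.continuousWithinAt) (by simp [h1, h2])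
          (fun t _ => hd t)
        refine ⟨w, fun _ => ⟨hw.1, hw.2, ?_⟩⟩
        exact (mul_eq_zero.mp hw0).resolve_left (Real.exp_pos _).ne'
      · exact ⟨0, fun h => absurd h hi⟩
    choose w hw using key
    have hg := ih hf.2 w (fun i hi => (hw i hi).2.2) (fun i hi =>
      ((hw i (by omega)).2.1).trans ((hw (i+1) hi).1))
    have hc : ∀ t, Real.exp (a * t) * f t = Real.exp (a * z 0) * f (z 0) := by
      intro t
      refine is_const_of_deriv_eq_zero (f := fun t => Real.exp (a * t) * f t)
        (fun t => (hd t).differentiableAt) ?_ t (z 0)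
      intro t
      rw [(hd t).deriv, hg t, mul_zero]
    intro t
    have := hc t
    rw [hz 0 (by simp), mul_zero] at this
    exact (mul_eq_zero.mp this).resolve_left (Real.exp_pos _).ne'

theorem AnnL.poly (l : List ℝ) (a : ℝ) : ∀ (q : Polynomial ℝ),
    q.degree < (l.count a : ℕ) → AnnL l (fun t => q.eval t * Real.exp (-a * t)) := by
  induction l with
  | nil =>
    intro q hq t
    have : q = 0 := by
      rw [← Polynomial.degree_eq_bot]
      simpa using hq
    simp [this]
  | cons b l ih =>
    intro q hq
    have hd : ∀ t, HasDerivAt (fun t => q.eval t * Real.exp (-a * t))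
        (q.derivative.eval t * Real.exp (-a * t) - a * (q.eval t * Real.exp (-a * t))) t := by
      intro t
      have h1 : HasDerivAt (fun t => Real.exp (-a * t)) (Real.exp (-a * t) * (-a)) t := by
        simpa using ((hasDerivAt_id t).const_mul (-a)).exp
      exact ((q.hasDerivAt t).mul h1).congr_deriv (by ring)
    refine ⟨fun t => (hd t).differentiableAt, ?_⟩
    have : (fun t => deriv (fun t => q.eval t * Real.exp (-a * t)) t
        + b * (q.eval t * Real.exp (-a * t))) =
        fun t => (q.derivative + Polynomial.C (b - a) * q).eval t * Real.exp (-a * t) := by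
      funext t
      rw [(hd t).deriv]
      simp
      ring
    rw [this]
    apply ih
    by_cases hb : b = a
    · subst hb
      simp only [sub_self, Polynomial.C_0, zero_mul, add_zero]
      rw [List.count_cons_self] at hq
      by_cases h0 : q = 0
      · simp [h0]
      · refine lt_of_lt_of_le (Polynomial.degree_derivative_lt h0) ?_
        rw [Polynomial.degree_eq_natDegree h0] at hq ⊢
        have := Nat.cast_lt.mp hq
        exact_mod_cast Nat.lt_succ_iff.mp this
    · rw [List.count_cons_of_ne hb] at hq
      refine lt_of_le_of_lt (Polynomial.degree_add_le _ _) (max_lt ?_ ?_)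
      · exact lt_of_le_of_lt Polynomial.degree_derivative_le hq
      · refine lt_of_le_of_lt ?_ hq
        rw [Polynomial.degree_C_mul (sub_ne_zero.mpr hb)]

noncomputable def mIdx (d : ℕ) (h : Fin d → ℝ) (i : Fin d) : ℕ :=
  Nat.card {j : Fin d // j < i ∧ h j = h i}

theorem mIdx_eq (d : ℕ) (h : Fin d → ℝ) (i : Fin d) :
    mIdx d h i = (Finset.univ.filter fun j : Fin d => j < i ∧ h j = h i).card := by
  classical
  unfold mIdx
  rw [Nat.card_eq_fintype_card, Fintype.card_subtype]

theorem mIdx_lt_count (d : ℕ) (h : Fin d → ℝ) (i : Fin d) :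
    mIdx d h i < (List.ofFn h).count (h i) := by
  classical
  have h1 : (List.ofFn h).count (h i) = (Finset.univ.filter fun j : Fin d => h j = h i).card := by
    rw [List.ofFn_eq_map, List.count_eq_countP, List.countP_map, Finset.card_def,
      Finset.filter_val, ← Multiset.countP_eq_card_filter]
    have : (Finset.univ : Finset (Fin d)).val = (List.finRange d : Multiset (Fin d)) := rfl
    rw [this, Multiset.coe_countP]
    congr 1
  rw [h1, mIdx_eq]
  apply Finset.card_lt_card
  rw [Finset.ssubset_iff_of_subset (by intro j hj; simp at hj ⊢; exact hj.2)]
  exact ⟨i, by simp, by simp⟩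

theorem mIdx_pred (d : ℕ) (h : Fin d → ℝ) (i : Fin d) (k : ℕ) (hk : mIdx d h i = k + 1) :
    ∃ j, h j = h i ∧ mIdx d h j = k := by
  classical
  set S := Finset.univ.filter fun j : Fin d => j < i ∧ h j = h i with hS
  have hc : S.card = k + 1 := by rw [← hk, mIdx_eq]
  have hne : S.Nonempty := by rw [← Finset.card_pos]; omega
  have hm := Finset.max'_mem S hne
  set j := S.max' hne with hj
  have hj' : j < i ∧ h j = h i := by simpa [hS] using hm
  refine ⟨j, hj'.2, ?_⟩
  rw [mIdx_eq]
  have : (Finset.univ.filter fun l : Fin d => l < j ∧ h l = h j) = S.erase j := by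
    ext l
    simp only [Finset.mem_filter, Finset.mem_univ, true_and, Finset.mem_erase, hS]
    constructor
    · rintro ⟨h1, h2⟩
      exact ⟨h1.ne, h1.trans hj'.1, h2.trans hj'.2⟩
    · rintro ⟨h1, h2, h3⟩
      have : l ≤ j := Finset.le_max' S l (by simp [hS, h2, h3])
      exact ⟨lt_of_le_of_ne this h1, h3.trans hj'.2.symm⟩
  rw [this, Finset.card_erase_of_mem hm, hc]
  rfl

theorem mIdx_le (d : ℕ) (h : Fin d → ℝ) (i : Fin d) (k : ℕ) (hk : k ≤ mIdx d h i) :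
    ∃ j, h j = h i ∧ mIdx d h j = k := by
  obtain ⟨n, hn⟩ := Nat.exists_eq_add_of_le hk
  clear hk
  induction n generalizing k with
  | zero => exact ⟨i, rfl, by simpa using hn⟩
  | succ n ih =>
    obtain ⟨j, h1, h2⟩ := ih (k+1) (by omega)
    obtain ⟨j', h3, h4⟩ := mIdx_pred d h j k h2
    exact ⟨j', h3.trans h1, h4⟩

theorem expPoly_ann {d : ℕ} {h : Fin d → ℝ} {p : ℝ → ℝ} (hp : p ∈ expPoly d h) :
    AnnL (List.ofFn h) p := by
  obtain ⟨c, hc⟩ := hp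
  have : p = fun t => ∑ i : Fin d, c i * (((Polynomial.X ^ mIdx d h i : Polynomial ℝ).eval t)
      * Real.exp (-(h i) * t)) := by
    funext t
    rw [hc t]
    simp [mIdx, mul_assoc]
  rw [this]
  apply AnnL.sum
  intro i _
  apply AnnL.smul
  apply AnnL.poly
  rw [Polynomial.degree_X_pow]
  exact_mod_cast mIdx_lt_count d h i

theorem expPoly_add {d : ℕ} {h : Fin d → ℝ} {p q : ℝ → ℝ} (hp : p ∈ expPoly d h)
    (hq : q ∈ expPoly d h) : (fun t => p t + q t) ∈ expPoly d h := by
  obtain ⟨c, hc⟩ := hp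
  obtain ⟨e, he⟩ := hq
  refine ⟨fun i => c i + e i, fun t => ?_⟩
  simp only [hc t, he t, ← Finset.sum_add_distrib]
  exact Finset.sum_congr rfl fun i _ => by ring

theorem expPoly_smul {d : ℕ} {h : Fin d → ℝ} {p : ℝ → ℝ} (a : ℝ) (hp : p ∈ expPoly d h) :
    (fun t => a * p t) ∈ expPoly d h := by
  obtain ⟨c, hc⟩ := hp
  refine ⟨fun i => a * c i, fun t => ?_⟩
  simp only [hc t, Finset.mul_sum]
  exact Finset.sum_congr rfl fun i _ => by ring

theorem expPoly_sum {d : ℕ} {h : Fin d → ℝ} {ι : Type} (s : Finset ι) (f : ι → ℝ → ℝ)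
    (hf : ∀ i ∈ s, f i ∈ expPoly d h) : (fun t => ∑ i ∈ s, f i t) ∈ expPoly d h := by
  classical
  induction s using Finset.induction_on with
  | empty => exact ⟨fun _ => 0, by simp⟩
  | insert a s ha ih =>
    simp only [Finset.sum_insert ha]
    exact expPoly_add (hf a (by simp)) (ih fun i hi => hf i (by simp [hi]))

theorem expPoly_basis {d : ℕ} {h : Fin d → ℝ} (i : Fin d) :
    (fun t => t ^ mIdx d h i * Real.exp (-(h i) * t)) ∈ expPoly d h := by
  classical
  refine ⟨Pi.single i 1, fun t => ?_⟩
  rw [Finset.sum_eq_single i]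
  · simp [mIdx]
  · intro j _ hj
    simp [Pi.single_apply, hj]
  · simp

theorem expPoly_shift {d : ℕ} {h : Fin d → ℝ} {p : ℝ → ℝ} (s : ℝ) (hp : p ∈ expPoly d h) :
    (fun t => p (t + s)) ∈ expPoly d h := by
  obtain ⟨c, hc⟩ := hp
  have : (fun t => p (t + s)) = fun t => ∑ i : Fin d, c i *
      (∑ k ∈ Finset.range (mIdx d h i + 1),
        (s ^ (mIdx d h i - k) * ((mIdx d h i).choose k : ℝ) * Real.exp (-(h i) * s)) *
          (t ^ k * Real.exp (-(h i) * t))) := by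
    funext t
    rw [hc]
    refine Finset.sum_congr rfl fun i _ => ?_
    change c i * (t + s) ^ mIdx d h i * _ = _
    rw [add_pow, mul_assoc, Finset.sum_mul, mul_add, Real.exp_add]
    congr 1
    exact Finset.sum_congr rfl fun k _ => by ring
  rw [this]
  apply expPoly_sum
  intro i _
  apply expPoly_smul
  apply expPoly_sum
  intro k hk
  apply expPoly_smul
  obtain ⟨j, h1, h2⟩ := mIdx_le d h i k (by simp at hk; omega)
  have := expPoly_basis (h := h) j
  rwa [h1, h2] at this

theorem bdd_basis (m : ℕ) (a : ℝ) (ha : 0 < a) :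
    ∃ C, ∀ t, 0 ≤ t → |t ^ m * Real.exp (-a * t)| ≤ C := by
  refine ⟨m.factorial / a ^ m, fun t ht => ?_⟩
  rw [abs_of_nonneg (by positivity)]
  have h1 := Real.pow_div_factorial_le_exp (a * t) (by positivity) m
  have h2 : Real.exp (-a * t) * Real.exp (a * t) = 1 := by
    rw [← Real.exp_add]; simp
  have h3 : (0:ℝ) < m.factorial := by positivity
  rw [div_le_iff₀ h3, mul_pow] at h1
  rw [le_div_iff₀ (by positivity)]
  have h4 := mul_le_mul_of_nonneg_left h1 (Real.exp_pos (-a * t)).le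
  calc t ^ m * Real.exp (-a * t) * a ^ m = Real.exp (-a * t) * (a ^ m * t ^ m) := by ring
    _ ≤ _ := h4
    _ = (Real.exp (-a * t) * Real.exp (a * t)) * m.factorial := by ring
    _ = _ := by rw [h2, one_mul]

theorem expPoly_bdd {d : ℕ} {h : Fin d → ℝ} (hpos : ∀ i, 0 < h i) {p : ℝ → ℝ}
    (hp : p ∈ expPoly d h) : BddAbove ((fun t => |p t|) '' Set.Ici (0 : ℝ)) := by
  obtain ⟨c, hc⟩ := hp
  choose C hC using fun i => bdd_basis (mIdx d h i) (h i) (hpos i)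
  refine ⟨∑ i, |c i| * C i, ?_⟩
  rintro _ ⟨t, ht, rfl⟩
  simp only [hc t]
  refine (Finset.abs_sum_le_sum_abs _ _).trans (Finset.sum_le_sum fun i _ => ?_)
  rw [mul_assoc, abs_mul]
  exact mul_le_mul_of_nonneg_left (hC i t ht) (abs_nonneg _)

theorem expPoly_le {d : ℕ} {h : Fin d → ℝ} (hpos : ∀ i, 0 < h i) {p : ℝ → ℝ}
    (hp : p ∈ expPoly d h) (hs : supAbs p ≤ 1) (t : ℝ) (ht : 0 ≤ t) : |p t| ≤ 1 :=
  (le_csSup (expPoly_bdd hpos hp) ⟨t, ht, rfl⟩).trans hs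

theorem AnnL.diff {l : List ℝ} {f : ℝ → ℝ} (hl : 0 < l.length) (hf : AnnL l f) :
    Differentiable ℝ f := by
  cases l with
  | nil => simp at hl
  | cons a l => exact hf.1

theorem ivt_sign {q : ℝ → ℝ} (hq : Continuous q) {a b : ℝ} (hab : a < b) (h : q a * q b < 0) :
    ∃ z, a < z ∧ z < b ∧ q z = 0 := by
  have h0 : (0:ℝ) ∈ q '' Set.uIcc a b := by
    apply intermediate_value_uIcc hq.continuousOn
    rw [Set.mem_uIcc]
    rcases mul_neg_iff.mp h with ⟨h1, h2⟩ | ⟨h1, h2⟩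
    · right; exact ⟨h2.le, h1.le⟩
    · left; exact ⟨h1.le, h2.le⟩
  obtain ⟨z, hz, hz0⟩ := h0
  rw [Set.uIcc_of_le hab.le] at hz
  refine ⟨z, lt_of_le_of_ne hz.1 ?_, lt_of_le_of_ne hz.2 ?_, hz0⟩
  · rintro rfl; simp [hz0] at h
  · rintro rfl; simp [hz0] at h

/-- comparison lemma -/
theorem compare {d : ℕ} (hd : 2 ≤ d) {l : List ℝ} (hl : l.length = d) {T p : ℝ → ℝ}
    (hT : AnnL l T) (hp : AnnL l p) (hp1 : ∀ t, 0 ≤ t → |p t| < 1)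
    (N : ℕ → ℝ) (hN : ∀ k, k + 1 < d → N k < N (k+1))
    (hTN : ∀ k, k < d → T (N k) = (-1) ^ (k+1))
    (t : ℝ) (ht1 : t < N 1) (hx : p 0 = T t) : deriv p 0 ≤ deriv T t := by
  by_contra! hlt
  have hTd := hT.diff (by omega)
  have hpd := hp.diff (by omega)
  set q : ℝ → ℝ := fun s => T (s + t) + (-1) * p s with hq
  have hqA : AnnL l q := AnnL.add l (AnnL.shift l t hT) (AnnL.smul l (-1) hp)
  have hqd := hqA.diff (by omega)
  have hq0 : q 0 = 0 := by simp [hq, hx]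
  have hqder : deriv q 0 = deriv T t - deriv p 0 := by
    have h1 : HasDerivAt (fun s => T (s + t)) (deriv T t) 0 := by
      have : HasDerivAt T (deriv T t) (0 + t) := by simpa using (hTd t).hasDerivAt
      exact HasDerivAt.comp_add_const 0 t this
    have h2 := h1.add ((hpd 0).hasDerivAt.const_mul (-1))
    rw [show q = _ from hq]
    refine h2.deriv.trans (by ring)
  have hneg : deriv q 0 < 0 := by rw [hqder]; linarith
  obtain ⟨s0, hs0, hs1, hs2⟩ : ∃ s0, 0 < s0 ∧ s0 < N 1 - t ∧ q s0 < 0 := by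
    have h1 := (hqd 0).hasDerivAt
    have h2 := h1.tendsto_slope_zero_right
    have h3 := h2.eventually (gt_mem_nhds hneg)
    have h4 : ∀ᶠ s in nhdsWithin (0:ℝ) (Set.Ioi 0), s ∈ Set.Ioo 0 (N 1 - t) :=
      Ioo_mem_nhdsGT (by linarith)
    obtain ⟨s, hs, hs'⟩ := (h3.and h4).exists
    refine ⟨s, hs'.1, hs'.2, ?_⟩
    simp only [zero_add, hq0, sub_zero, smul_eq_mul] at hs
    by_contra! hc
    exact absurd hs (not_lt.mpr (mul_nonneg (inv_nonneg.mpr hs'.1.le) hc))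
  let μ : ℕ → ℝ := fun k => if k = 0 then s0 else N k - t
  have hμ : ∀ k, k + 1 < d → μ k < μ (k+1) := by
    intro k hk
    by_cases h0 : k = 0
    · subst h0; simpa [μ] using hs1
    · simp only [μ, h0, if_false, Nat.succ_ne_zero]
      linarith [hN k hk]
  have hμpos : ∀ k, k < d → 0 < μ k := by
    intro k
    induction k with
    | zero => intro _; simpa [μ] using hs0
    | succ k ih => intro hk; exact (ih (by omega)).trans (hμ k hk)
  have hsign : ∀ k, k < d → 0 < (-1) ^ (k+1) * q (μ k) := by
    intro k hk
    by_cases h0 : k = 0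
    · subst h0; simpa [μ] using hs2
    · have h1 := abs_lt.mp (hp1 (μ k) (hμpos k hk).le)
      have h2 : q (μ k) = (-1) ^ (k+1) - p (μ k) := by
        rw [← hTN k hk]
        simp [hq, μ, h0]
        ring
      rw [h2]
      rcases neg_one_pow_eq_or ℝ (k+1) with h3 | h3 <;> rw [h3] <;> linarith
  have hz : ∀ k, ∃ z, k + 1 < d → μ k < z ∧ z < μ (k+1) ∧ q z = 0 := by
    intro k
    by_cases hk : k + 1 < d
    · have h1 := hsign k (by omega)
      have h2 := hsign (k+1) hk
      obtain ⟨z, hz⟩ := ivt_sign hqd.continuous (hμ k hk) (by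
        rw [pow_succ (-1:ℝ) (k+1)] at h2
        rcases neg_one_pow_eq_or ℝ (k+1) with h3 | h3 <;> rw [h3] at h1 h2 <;> nlinarith)
      exact ⟨z, fun _ => hz⟩
    · exact ⟨0, fun h => absurd h hk⟩
  choose z hz using hz
  let Z : ℕ → ℝ := fun k => match k with
    | 0 => 0
    | k+1 => z k
  have := AnnL.eq_zero l hqA Z (by
      intro i hi
      cases i with
      | zero => exact hq0
      | succ i => exact (hz i (by omega)).2.2) (by
      intro i hi
      cases i with
      | zero => exact (hμpos 0 (by omega)).trans (hz 0 (by omega)).1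
      | succ i => exact ((hz i (by omega)).2.1).trans (hz (i+1) (by omega)).1)
  have hq00 : q = fun _ => 0 := funext this
  rw [hq00] at hneg
  simp at hneg

/-- If `T` is the `h`-Chebyshev polynomial of the system `P_h` (sup norm `1`, with
alternance points `0 = ν₁ < ν₂ < ⋯ < ν_d`, `T(νₖ) = (−1)ᵏ`), then `κ(h, ε)` equals
the infimum of `(1 − T(t))/(T'(t) − ε T(t))` over `t ∈ [0, ν₂]` with `T'(t) > ε T(t)`. -/
theorem kappa_eq_chebyshev_inf (d : ℕ) (hd : 2 ≤ d) (h : Fin d → ℝ)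
    (hmono : Monotone h) (hpos : ∀ i, 0 < h i) (hone : ∀ i, h i ≤ 1)
    (ε : ℝ) (hε : 0 < ε)
    (T : ℝ → ℝ) (hT : T ∈ expPoly d h) (hTnorm : supAbs T = 1)
    (ν : Fin d → ℝ) (hν0 : ν ⟨0, by omega⟩ = 0) (hνmono : StrictMono ν)
    (hTalt : ∀ k : Fin d, T (ν k) = (-1 : ℝ) ^ ((k : ℕ) + 1)) :
    kappa d h ε =
      sInf {y : ℝ | ∃ t ∈ Set.Icc (0 : ℝ) (ν ⟨1, by omega⟩),
          ε * T t < deriv T t ∧ y = (1 - T t) / (deriv T t - ε * T t)} := by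
  have hTA := expPoly_ann hT
  have hlen : (List.ofFn h).length = d := by simp
  have hTd := hTA.diff (by omega)
  have hTle := expPoly_le hpos hT hTnorm.le
  have hT0 : T 0 = -1 := by
    have := hTalt ⟨0, by omega⟩
    rw [hν0] at this
    simpa using this
  have hT1 : T (ν ⟨1, by omega⟩) = 1 := by
    simpa using hTalt ⟨1, by omega⟩
  have hν1 : 0 < ν ⟨1, by omega⟩ := by
    rw [← hν0]; exact hνmono (by simp [Fin.lt_def])
  have hT'0 : 0 ≤ deriv T 0 := by
    by_contra! hneg
    have h2 := (hTd 0).hasDerivAt.tendsto_slope_zero_right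
    have h3 := h2.eventually (gt_mem_nhds hneg)
    obtain ⟨s, hs, hs'⟩ := (h3.and (self_mem_nhdsWithin)).exists
    have hs' : 0 < s := hs'
    simp only [zero_add, hT0, smul_eq_mul] at hs
    have := (abs_le.mp (hTle s hs'.le)).1
    exact absurd hs (not_lt.mpr (mul_nonneg (inv_nonneg.mpr hs'.le) (by linarith)))
  set B := {y : ℝ | ∃ t ∈ Set.Icc (0 : ℝ) (ν ⟨1, by omega⟩),
          ε * T t < deriv T t ∧ y = (1 - T t) / (deriv T t - ε * T t)} with hB
  have hBne : B.Nonempty := ⟨_, 0, ⟨le_rfl, hν1.le⟩, by rw [hT0]; linarith, rfl⟩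
  have hBbdd : BddBelow B := by
    refine ⟨0, ?_⟩
    rintro _ ⟨t, ht, h1, rfl⟩
    exact div_nonneg (by linarith [(abs_le.mp (hTle t ht.1)).2]) (by linarith)
  unfold kappa
  set A := {y : ℝ | ∃ p ∈ expPoly d h, supAbs p ≤ 1 ∧ ε * p 0 < deriv p 0 ∧
      y = (1 - p 0) / (deriv p 0 - ε * p 0)} with hA
  have hAbdd : BddBelow A := by
    refine ⟨0, ?_⟩
    rintro _ ⟨p, hp, hs, h1, rfl⟩
    exact div_nonneg (by linarith [(abs_le.mp (expPoly_le hpos hp hs 0 le_rfl)).2]) (by linarith)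
  have hBA : B ⊆ A := by
    rintro _ ⟨t, ht, h1, rfl⟩
    have hder : deriv (fun s => T (s + t)) 0 = deriv T t := by
      rw [deriv_comp_add_const, zero_add]
    refine ⟨fun s => T (s + t), expPoly_shift t hT, ?_, ?_, ?_⟩
    · apply csSup_le (Set.image_nonempty.mpr ⟨0, Set.mem_Ici.mpr le_rfl⟩)
      rintro _ ⟨s, hs, rfl⟩
      exact hTle _ (add_nonneg hs ht.1)
    · rw [hder]; simpa using h1
    · rw [hder]; simp
  apply le_antisymm
  · exact csInf_le_csInf hAbdd hBne hBA
  · apply le_csInf (hBne.mono hBA)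
    rintro _ ⟨p, hp, hs, h1, rfl⟩
    have hple := expPoly_le hpos hp hs
    have hpA := expPoly_ann hp
    have hpd := hpA.diff (by omega)
    have hD : 0 < deriv p 0 - ε * p 0 := by linarith
    set D := deriv p 0 - ε * p 0 with hDdef
    have hx := abs_le.mp (hple 0 le_rfl)
    have key : ∀ c : ℝ, 0 < c → c < 1 → sInf B * (c * D) ≤ 1 - c * p 0 := by
      intro c hc0 hc1
      have hcp : ∀ t, 0 ≤ t → |c * p t| < 1 := by
        intro t ht
        rw [abs_mul, abs_of_pos hc0]
        nlinarith [hple t ht, abs_nonneg (p t)]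
      have hcx := abs_lt.mp (hcp 0 le_rfl)
      obtain ⟨t, ht, htx⟩ : c * p 0 ∈ T '' Set.Icc 0 (ν ⟨1, by omega⟩) := by
        apply intermediate_value_Icc hν1.le hTd.continuous.continuousOn
        rw [hT0, hT1]
        exact ⟨hcx.1.le, hcx.2.le⟩
      have htlt : t < ν ⟨1, by omega⟩ := by
        refine lt_of_le_of_ne ht.2 ?_
        rintro rfl
        rw [hT1] at htx
        linarith
      have hcmp := compare hd hlen hTA (AnnL.smul _ c hpA) hcp
        (fun k => if hk : k < d then ν ⟨k, hk⟩ else 0)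
        (by
          intro k hk
          simp only [hk, show k < d by omega, dif_pos]
          exact hνmono (by simp [Fin.lt_def]))
        (by
          intro k hk
          simp only [hk, dif_pos]
          exact hTalt ⟨k, hk⟩) t (by simpa [show 1 < d by omega] using htlt) htx.symm
      rw [deriv_const_mul c (hpd 0)] at hcmp
      have hcD : 0 < c * D := mul_pos hc0 hD
      have hE : c * D ≤ deriv T t - ε * T t := by
        rw [htx, hDdef]; linarith
      have hmem : sInf B ≤ (1 - T t) / (deriv T t - ε * T t) :=
        csInf_le hBbdd ⟨t, ht, by linarith, rfl⟩
      have : (1 - T t) / (deriv T t - ε * T t) ≤ (1 - T t) / (c * D) :=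
        div_le_div_of_nonneg_left (by rw [htx]; linarith) hcD hE
      have h3 := hmem.trans this
      rw [le_div_iff₀ hcD, htx] at h3
      exact h3
    rw [le_div_iff₀ hD]
    by_contra! hcon
    set Q := sInf B * D + p 0 with hQ
    have hQ1 : 1 < Q := by linarith
    have hinv : Q⁻¹ < 1 := inv_lt_one_of_one_lt₀ hQ1
    have hinv0 : 0 < Q⁻¹ := by positivity
    obtain ⟨c, hc1, hc2⟩ := exists_between hinv
    have := key c (hinv0.trans hc1) hc2
    have h4 : 1 < c * Q := by
      have := mul_lt_mul_of_pos_right hc1 (by linarith : 0 < Q)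
      rwa [inv_mul_cancel₀ (by linarith)] at this
    rw [hQ] at h4
    linarith
end

section
/- Let a > 0, M > 0, ε > 0, and let f : ℝ → ℝ be twice continuously differentiable on [0, a] with f(0) = 0, f'(0) = 0, 0 ≤ f''(t) ≤ M for all t ∈ [0, a], f(a) ≤ 1, and f'(a) > ε·(1 − f(a)). Then f(a) / (f'(a) − ε·(1 − f(a))) ≥ 2ε / (M + 2ε²). -/
/-- Analytic core of the discretization-step lower bound: if `f` is twice continuously
differentiable on `[0, a]` (with derivative `f'` and second derivative `f''` there),
`f(0) = f'(0) = 0`, `0 ≤ f'' ≤ M` on `[0, a]`, `f(a) ≤ 1` and `f'(a) > ε (1 − f(a))`,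
then `f(a) / (f'(a) − ε (1 − f(a))) ≥ 2ε / (M + 2ε²)`. -/
theorem ratio_lower_bound (a M ε : ℝ) (ha : 0 < a) (hM : 0 < M) (hε : 0 < ε)
    (f f' f'' : ℝ → ℝ)
    (hf' : ∀ t ∈ Set.Icc (0 : ℝ) a, HasDerivAt f (f' t) t)
    (hf'' : ∀ t ∈ Set.Icc (0 : ℝ) a, HasDerivAt f' (f'' t) t)
    (hcont : ContinuousOn f'' (Set.Icc (0 : ℝ) a))
    (hf0 : f 0 = 0) (hf'0 : f' 0 = 0)
    (hbd : ∀ t ∈ Set.Icc (0 : ℝ) a, 0 ≤ f'' t ∧ f'' t ≤ M)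
    (hfa : f a ≤ 1) (hfa' : ε * (1 - f a) < f' a) :
    2 * ε / (M + 2 * ε ^ 2) ≤ f a / (f' a - ε * (1 - f a)) := by
  have hmono : MonotoneOn f' (Set.Icc 0 a) := by
    apply monotoneOn_of_deriv_nonneg (convex_Icc 0 a)
    · exact fun t ht => (hf'' t ht).continuousAt.continuousWithinAt
    · exact fun t ht => (hf'' t (interior_subset ht)).differentiableAt.differentiableWithinAt
    · intro t ht
      rw [(hf'' t (interior_subset ht)).deriv]
      exact (hbd t (interior_subset ht)).1
  have hpos : ∀ t ∈ Set.Icc (0 : ℝ) a, 0 ≤ f' t := by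
    intro t ht
    have := hmono (Set.left_mem_Icc.2 ha.le) ht ht.1
    rwa [hf'0] at this
  have hd : ∀ t ∈ Set.Icc (0 : ℝ) a,
      HasDerivAt (fun x => 2 * M * f x - f' x * f' x)
        (2 * M * f' t - (f'' t * f' t + f' t * f'' t)) t := fun t ht =>
    ((hf' t ht).const_mul (2 * M)).sub ((hf'' t ht).mul (hf'' t ht))
  have hg : MonotoneOn (fun x => 2 * M * f x - f' x * f' x) (Set.Icc 0 a) := by
    apply monotoneOn_of_deriv_nonneg (convex_Icc 0 a)
    · exact fun t ht => (hd t ht).continuousAt.continuousWithinAt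
    · exact fun t ht => (hd t (interior_subset ht)).differentiableAt.differentiableWithinAt
    · intro t ht
      rw [(hd t (interior_subset ht)).deriv]
      have h1 := hpos t (interior_subset ht)
      have h2 := (hbd t (interior_subset ht)).2
      nlinarith [mul_nonneg h1 (sub_nonneg.2 h2)]
  have key := hg (Set.left_mem_Icc.2 ha.le) (Set.right_mem_Icc.2 ha.le) ha.le
  simp only [hf0, hf'0] at key
  rw [div_le_div_iff₀ (by positivity) (by linarith)]
  nlinarith [sq_nonneg (f' a - 2 * ε)]
end

section
/- Let d ≥ 1 and ε > 0. For every vector h = (h₁,…,h_d) with 0 < h₁ ≤ ⋯ ≤ h_d ≤ 1 one has κ(h, ε) ≥ κ(𝟙, ε), where 𝟙 = (1,…,1) ∈ ℝ^d is the vector of ones; that is, the minimum of κ(·, ε) over the simplex { h : 0 < h₁ ≤ ⋯ ≤ h_d ≤ 1 } is attained at h = 𝟙, where P_𝟙 is the space of functions e^{−t}·q(t) with q a real polynomial of degree ≤ d−1. -/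
/-- Smooth functions. -/
def SM : Submodule ℝ (ℝ → ℝ) where
  carrier := {f | ContDiff ℝ (⊤ : ℕ∞) f}
  add_mem' := by
    intro f g hf hg
    simp only [Set.mem_ofPred_eq] at hf hg ⊢
    exact ContDiff.add hf hg
  zero_mem' := by
    simp only [Set.mem_ofPred_eq]
    exact contDiff_const
  smul_mem' := by
    intro c f hf
    simp only [Set.mem_ofPred_eq] at hf ⊢
    exact ContDiff.const_smul c hf

instance instSMG : AddCommGroup SM := inferInstance

instance instSMM : Module ℝ SM := inferInstance

theorem SM.contDiff (f : SM) : ContDiff ℝ (⊤ : ℕ∞) f.1 := f.2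

theorem SM.diff (f : SM) : Differentiable ℝ f.1 := (SM.contDiff f).differentiable (by simp)

theorem SM.cont (f : SM) : Continuous f.1 := (SM.contDiff f).continuous

/-- Derivative as an endomorphism. -/
noncomputable def DD : Module.End ℝ SM where
  toFun f := ⟨deriv f.1, (contDiff_infty_iff_deriv.1 (SM.contDiff f)).2⟩
  map_add' f g := by
    ext t
    exact deriv_add (SM.diff f t) (SM.diff g t)
  map_smul' c f := by
    ext t
    exact deriv_const_smul c (SM.diff f t)

theorem DD_apply (f : SM) (t : ℝ) : (DD f).1 t = deriv f.1 t := rfl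

theorem SM.hasDeriv (f : SM) (t : ℝ) : HasDerivAt f.1 ((DD f).1 t) t := (SM.diff f t).hasDerivAt

/-- The operator `∏ (D + a)`. -/
noncomputable def Op (M : Multiset ℝ) : Module.End ℝ SM :=
  Polynomial.aeval DD (M.map (fun a => Polynomial.X + Polynomial.C a)).prod

theorem Op_zero (f : SM) : Op 0 f = f := by simp [Op]

theorem Op_cons' (a : ℝ) (M : Multiset ℝ) (f : SM) :
    Op (a ::ₘ M) f = DD (Op M f) + a • Op M f := by
  simp [Op, Algebra.algebraMap_eq_smul_one]

theorem Op_cons (a : ℝ) (M : Multiset ℝ) (f : SM) :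
    Op (a ::ₘ M) f = Op M (DD f + a • f) := by
  have : (Polynomial.X + Polynomial.C a) * (M.map (fun a => Polynomial.X + Polynomial.C a)).prod
    = (M.map (fun a => Polynomial.X + Polynomial.C a)).prod * (Polynomial.X + Polynomial.C a) :=
    mul_comm _ _
  unfold Op
  rw [Multiset.map_cons, Multiset.prod_cons, this, map_mul]
  simp [Algebra.algebraMap_eq_smul_one]

theorem Op_DD (M : Multiset ℝ) (f : SM) : Op M (DD f) = DD (Op M f) := by
  have h1 := Op_cons 0 M f
  rw [Op_cons'] at h1
  simpa using h1.symm

/-- exponential -/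
noncomputable def Ex (b : ℝ) : SM :=
  ⟨fun t => Real.exp (-b * t), by
    change ContDiff ℝ (⊤ : ℕ∞) (fun t : ℝ => Real.exp (-b * t))
    fun_prop⟩

theorem Ex_apply (b t : ℝ) : (Ex b).1 t = Real.exp (-b * t) := rfl

theorem DD_Ex (b : ℝ) : DD (Ex b) = (-b) • Ex b := by
  ext t
  have : HasDerivAt (fun t => Real.exp (-b * t)) (Real.exp (-b*t) * (-b * 1)) t :=
    ((hasDerivAt_id t).const_mul (-b)).exp
  have h2 : (DD (Ex b)).1 t = _ := this.deriv
  rw [h2]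
  simp [Ex_apply]
  ring

/-- `e^{at} f` has derivative `e^{at} (D+a) f`. -/
theorem hasDeriv_mul_exp (a : ℝ) (f : SM) (t : ℝ) :
    HasDerivAt (fun t => Real.exp (a * t) * f.1 t)
      (Real.exp (a * t) * (DD f + a • f).1 t) t := by
  have h1 : HasDerivAt (fun t => Real.exp (a * t)) (Real.exp (a*t) * (a * 1)) t :=
    ((hasDerivAt_id t).const_mul a).exp
  have := h1.mul (SM.hasDeriv f t)
  refine HasDerivAt.congr_deriv this ?_
  simp only [Submodule.coe_add, Submodule.coe_smul, Pi.add_apply, Pi.smul_apply, smul_eq_mul]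
  ring

theorem ker_T (a : ℝ) (f : SM) (h : DD f + a • f = 0) : f = f.1 0 • Ex a := by
  have h1 : ∀ t, HasDerivAt (fun t => Real.exp (a * t) * f.1 t) 0 t := by
    intro t
    have := hasDeriv_mul_exp a f t
    rw [h] at this
    simpa using this
  ext t
  have h2 := is_const_of_deriv_eq_zero (fun t => (h1 t).differentiableAt) (fun t => (h1 t).deriv) t 0
  simp at h2
  simp only [Submodule.coe_smul, Pi.smul_apply, Ex_apply, smul_eq_mul]
  rw [← h2, neg_mul, Real.exp_neg]
  field_simp

theorem rolle_fin (a : ℝ) (f : SM) (n : ℕ) (Z : Finset ℝ) (hc : Z.card = n + 1)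
    (hZ : ∀ z ∈ Z, f.1 z = 0) :
    ∃ Z' : Finset ℝ, Z'.card = n ∧ (∀ z ∈ Z', (DD f + a • f).1 z = 0) ∧ Disjoint Z Z' ∧
      ∀ z ∈ Z', ∃ y ∈ Z, y < z := by
  let e := Z.orderEmbOfFin hc
  have he : ∀ i, e i ∈ Z := fun i => Z.orderEmbOfFin_mem hc i
  have key : ∀ i : Fin n, ∃ x ∈ Set.Ioo (e i.castSucc) (e i.succ), (DD f + a • f).1 x = 0 := by
    intro i
    have hlt : e i.castSucc < e i.succ := e.strictMono (Fin.castSucc_lt_succ)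
    obtain ⟨x, hx, hx'⟩ := exists_hasDerivAt_eq_zero hlt
      (f := fun t => Real.exp (a * t) * f.1 t)
      (f' := fun t => Real.exp (a * t) * (DD f + a • f).1 t)
      (fun t _ => (hasDeriv_mul_exp a f t).continuousAt.continuousWithinAt)
      (by simp [hZ _ (he _)]) (fun t _ => hasDeriv_mul_exp a f t)
    refine ⟨x, hx, ?_⟩
    exact (mul_eq_zero.1 hx').resolve_left (Real.exp_ne_zero _)
  choose ζ hζ hζ0 using key
  have hmono : StrictMono ζ := by
    intro i j hij
    have h1 : e i.succ ≤ e j.castSucc := e.monotone (by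
      rw [Fin.le_def]; simp; exact hij)
    exact (hζ i).2.trans_le (h1.trans (hζ j).1.le)
  refine ⟨Finset.univ.image ζ, ?_, ?_, ?_, ?_⟩
  · rw [Finset.card_image_of_injective _ hmono.injective]; simp
  · simpa using hζ0
  · rw [Finset.disjoint_right]
    simp only [Finset.mem_image, Finset.mem_univ, true_and]
    rintro _ ⟨i, rfl⟩ hmem
    have : ζ i ∈ Set.range e := by
      rw [Finset.range_orderEmbOfFin]; exact hmem
    obtain ⟨j, hj⟩ := this
    have h1 := (hζ i).1
    have h2 := (hζ i).2
    rw [← hj, e.lt_iff_lt, Fin.lt_def] at h1 h2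
    simp at h1 h2
    omega
  · simp only [Finset.mem_image, Finset.mem_univ, true_and]
    rintro _ ⟨i, rfl⟩
    exact ⟨_, he _, (hζ i).1⟩

theorem zero_count (M : Multiset ℝ) : ∀ (f : SM) (_ : Op M f = 0) (Z : Finset ℝ)
    (_ : M.card ≤ Z.card) (_ : ∀ z ∈ Z, f.1 z = 0), f = 0 := by
  induction M using Multiset.induction_on with
  | empty => intro f hf Z _ _; simpa [Op_zero] using hf
  | cons a M ih =>
    intro f hf Z hc hZ
    rw [Multiset.card_cons] at hc
    obtain ⟨n, hn⟩ : ∃ n, Z.card = n + 1 := ⟨Z.card - 1, by omega⟩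
    obtain ⟨Z', h1, h2, h3, h4⟩ := rolle_fin a f n Z hn hZ
    rw [Op_cons] at hf
    have := ker_T a f (ih _ hf Z' (by omega) h2)
    obtain ⟨z, hz⟩ : Z.Nonempty := by rw [← Finset.card_pos]; omega
    have hz0 := hZ z hz
    rw [this] at hz0
    simp [Ex_apply, Real.exp_ne_zero] at hz0
    rw [this, hz0]; simp

theorem zero_count' (M : Multiset ℝ) (f : SM) (hf : Op M f = 0) (Z : Finset ℝ)
    (hc : M.card ≤ Z.card + 1) (hM : M ≠ 0) (hZ : ∀ z ∈ Z, f.1 z = 0) (z : ℝ) (hz : z ∈ Z)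
    (hd : (DD f).1 z = 0) : f = 0 := by
  obtain ⟨a, ha⟩ := Multiset.exists_mem_of_ne_zero hM
  obtain ⟨M, rfl⟩ := Multiset.exists_cons_of_mem ha
  rw [Multiset.card_cons] at hc
  have hpos : 0 < Z.card := Finset.card_pos.2 ⟨z, hz⟩
  obtain ⟨n, hn⟩ : ∃ n, Z.card = n + 1 := ⟨Z.card - 1, by omega⟩
  obtain ⟨Z', h1, h2, h3, h4⟩ := rolle_fin a f n Z hn hZ
  rw [Op_cons] at hf
  have hzZ : z ∉ Z' := Finset.disjoint_left.1 h3 hz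
  have := ker_T a f (zero_count M _ hf (insert z Z')
    (by rw [Finset.card_insert_of_notMem hzZ]; omega) (by
      intro x hx
      rcases Finset.mem_insert.1 hx with rfl | hx
      · simp [hd, hZ _ hz]
      · exact h2 x hx))
  have hz0 := hZ z hz
  rw [this] at hz0
  simp [Ex_apply, Real.exp_ne_zero] at hz0
  rw [this, hz0]; simp

theorem sign_left (b c : ℝ) (hc0 : c ≠ 0) (M : Multiset ℝ) : ∀ (f : SM) (_ : Op M f = c • Ex b)
    (Z : Finset ℝ) (_ : Z.card = M.card) (_ : ∀ z ∈ Z, f.1 z = 0) (t : ℝ) (_ : ∀ z ∈ Z, t < z),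
    0 < c * f.1 t * (-1) ^ M.card := by
  induction M using Multiset.induction_on with
  | empty =>
    intro f hf Z _ _ t _
    rw [Op_zero] at hf
    rw [hf]
    have := Real.exp_pos (-b * t)
    have h2 : 0 < c * c := mul_self_pos.2 hc0
    simp only [Submodule.coe_smul, Pi.smul_apply, Ex_apply, smul_eq_mul, Multiset.card_zero, pow_zero]
    nlinarith [mul_pos h2 this]
  | cons a M ih =>
    intro f hf Z hc hZ t ht
    rw [Multiset.card_cons] at hc
    obtain ⟨Z', h1, h2, h3, h4⟩ := rolle_fin a f _ Z hc hZ
    rw [Op_cons] at hf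
    have hne : Z.Nonempty := by rw [← Finset.card_pos]; omega
    set z := Z.min' hne with hz
    have hzZ : z ∈ Z := Z.min'_mem hne
    have h5 : ∀ x ≤ z, 0 < c * (DD f + a • f).1 x * (-1) ^ M.card := by
      intro x hx
      refine ih _ hf Z' h1 h2 x ?_
      intro y hy
      obtain ⟨w, hw, hwy⟩ := h4 y hy
      exact hx.trans_lt ((Z.min'_le w hw).trans_lt hwy)
    have htz := ht z hzZ
    obtain ⟨x, hx, hx'⟩ := exists_hasDerivAt_eq_slope
      (fun t => Real.exp (a * t) * f.1 t)
      (fun t => Real.exp (a * t) * (DD f + a • f).1 t) htz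
      (fun t _ => (hasDeriv_mul_exp a f t).continuousAt.continuousWithinAt)
      (fun t _ => hasDeriv_mul_exp a f t)
    have h6 := h5 x hx.2.le
    simp only [hZ z hzZ] at hx'
    rw [eq_div_iff (by linarith)] at hx'
    have e1 := Real.exp_pos (a * x)
    have e2 := Real.exp_pos (a * t)
    have h7 : 0 < Real.exp (a * t) * (c * f.1 t * (-1) ^ (M.card + 1)) := by
      have : Real.exp (a * t) * (c * f.1 t * (-1) ^ (M.card + 1)) =
        (Real.exp (a * x) * (z - t)) * (c * (DD f + a • f).1 x * (-1) ^ M.card) := by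
        rw [pow_succ]
        linear_combination (-c * (-1) ^ M.card) * hx'
      rw [this]
      exact mul_pos (mul_pos e1 (by linarith)) h6
    rw [Multiset.card_cons]
    exact (mul_pos_iff_of_pos_left e2).1 h7

/-- The kernel space. -/
noncomputable def VV (M : Multiset ℝ) : Submodule ℝ SM := LinearMap.ker (Op M)

theorem mem_VV {M : Multiset ℝ} {f : SM} : f ∈ VV M ↔ Op M f = 0 := LinearMap.mem_ker

theorem DD_mem {M : Multiset ℝ} {f : SM} (hf : f ∈ VV M) : DD f ∈ VV M := by
  rw [mem_VV] at *
  rw [Op_DD, hf, map_zero]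

theorem solve (a : ℝ) (g : SM) (y : ℝ) : ∃ f : SM, DD f + a • f = g ∧ f.1 0 = y := by
  let F : ℝ → ℝ := fun t => Real.exp (-a * t) * (y + ∫ s in (0:ℝ)..t, Real.exp (a * s) * g.1 s)
  have hc : Continuous (fun s => Real.exp (a * s) * g.1 s) := by
    have := SM.cont g
    fun_prop
  have hI : ∀ t, HasDerivAt (fun t => ∫ s in (0:ℝ)..t, Real.exp (a * s) * g.1 s)
      (Real.exp (a * t) * g.1 t) t := fun t =>
    intervalIntegral.integral_hasDerivAt_right (hc.intervalIntegrable _ _)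
      (hc.stronglyMeasurableAtFilter _ _) hc.continuousAt
  have hIc : ContDiff ℝ (⊤ : ℕ∞) (fun t => ∫ s in (0:ℝ)..t, Real.exp (a * s) * g.1 s) := by
    rw [contDiff_infty_iff_deriv]
    refine ⟨fun t => (hI t).differentiableAt, ?_⟩
    have : deriv (fun t => ∫ s in (0:ℝ)..t, Real.exp (a * s) * g.1 s) =
      fun t => Real.exp (a * t) * g.1 t := funext fun t => (hI t).deriv
    rw [this]
    have := SM.contDiff g
    fun_prop
  have hF : ContDiff ℝ (⊤ : ℕ∞) F := by fun_prop
  have hE : ∀ t, HasDerivAt (fun t => Real.exp (-a * t)) (Real.exp (-a*t) * (-a * 1)) t := fun t =>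
    ((hasDerivAt_id t).const_mul (-a)).exp
  refine ⟨⟨F, hF⟩, ?_, ?_⟩
  · ext t
    have h1 : HasDerivAt F _ t := (hE t).mul ((hI t).const_add y)
    have h2 : (DD ⟨F, hF⟩).1 t = _ := h1.deriv
    simp only [Submodule.coe_add, Submodule.coe_smul, Pi.add_apply, Pi.smul_apply, smul_eq_mul]
    rw [h2]
    have : Real.exp (-a * t) * Real.exp (a * t) = 1 := by
      rw [← Real.exp_add]; simp
    simp only [F]
    linear_combination (g.1 t) * this
  · simp [F]

theorem VV_dim (M : Multiset ℝ) : Module.Finite ℝ (VV M) ∧ Module.finrank ℝ (VV M) = M.card := by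
  induction M using Multiset.induction_on with
  | empty =>
    have : VV 0 = ⊥ := by
      ext f
      rw [mem_VV, Op_zero]
      simp
    rw [this]
    exact ⟨inferInstance, by simp⟩
  | cons a M ih =>
    obtain ⟨i1, i2⟩ := ih
    let φ : VV (a ::ₘ M) →ₗ[ℝ] VV M × ℝ :=
      { toFun := fun f => (⟨DD f.1 + a • f.1, by
            have := f.2
            rw [mem_VV, Op_cons] at this
            exact this⟩, f.1.1 0)
        map_add' := by
          intro f g
          ext t
          · simp; ring
          · simp
        map_smul' := by
          intro c f
          ext t
          · simp; ring
          · simp }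
    have hb : Function.Bijective φ := by
      constructor
      · rw [← LinearMap.ker_eq_bot, LinearMap.ker_eq_bot']
        intro f hf
        have h1 : DD f.1 + a • f.1 = 0 := congrArg (fun x => (x.1 : SM)) hf
        have h2 : f.1.1 0 = 0 := congrArg (fun x => x.2) hf
        have := ker_T a f.1 h1
        rw [h2, zero_smul] at this
        exact Subtype.ext this
      · rintro ⟨g, y⟩
        obtain ⟨f, h1, h2⟩ := solve a g.1 y
        refine ⟨⟨f, ?_⟩, ?_⟩
        · rw [mem_VV, Op_cons, h1]
          exact g.2
        · exact Prod.ext (Subtype.ext h1) h2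
    let e := LinearEquiv.ofBijective φ hb
    refine ⟨Module.Finite.equiv e.symm, ?_⟩
    rw [e.finrank_eq, Module.finrank_prod, i2]
    simp

/-- Evaluation on a finset. -/
noncomputable def evL (M : Multiset ℝ) (Z : Finset ℝ) : VV M →ₗ[ℝ] (Z → ℝ) where
  toFun f := fun z => f.1.1 z
  map_add' _ _ := rfl
  map_smul' _ _ := rfl

theorem evL_bij (M : Multiset ℝ) (Z : Finset ℝ) (hc : Z.card = M.card) :
    Function.Bijective (evL M Z) := by
  obtain ⟨i1, i2⟩ := VV_dim M
  have hinj : Function.Injective (evL M Z) := by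
    rw [← LinearMap.ker_eq_bot, LinearMap.ker_eq_bot']
    intro f hf
    refine Subtype.ext (zero_count M f.1 f.2 Z hc.ge ?_)
    intro z hz
    exact congrFun hf ⟨z, hz⟩
  refine ⟨hinj, ?_⟩
  refine (LinearMap.injective_iff_surjective_of_finrank_eq_finrank ?_).1 hinj
  rw [i2]; simp [hc]

theorem interp (M : Multiset ℝ) (Z : Finset ℝ) (hc : Z.card ≤ M.card) (y : ℝ → ℝ) :
    ∃ f ∈ VV M, ∀ z ∈ Z, f.1 z = y z := by
  obtain ⟨Z', hZ, hc'⟩ := Infinite.exists_superset_card_eq Z M.card hc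
  obtain ⟨f, hf⟩ := (evL_bij M Z' hc').2 (fun z => y z)
  exact ⟨f.1, f.2, fun z hz => congrFun hf ⟨z, hZ hz⟩⟩

theorem decay (M : Multiset ℝ) (hM : ∀ a ∈ M, 0 < a) : ∀ f ∈ VV M,
    ∃ δ > 0, ∃ C, ∀ t ≥ 0, |f.1 t| ≤ C * Real.exp (-δ * t) := by
  induction M using Multiset.induction_on with
  | empty =>
    intro f hf
    rw [mem_VV, Op_zero] at hf
    refine ⟨1, one_pos, 0, ?_⟩
    intro t _
    simp [hf]
  | cons a M ih =>
    intro f hf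
    have ha : 0 < a := hM a (by simp)
    rw [mem_VV, Op_cons] at hf
    obtain ⟨δ, hδ, C, hC⟩ := ih (fun b hb => hM b (by simp [hb])) _ hf
    set g := DD f + a • f with hg
    let η := min (a / 2) δ
    have hη : 0 < η := lt_min (by linarith) hδ
    have hηa : 0 < a - η := by
      have : η ≤ a / 2 := min_le_left _ _
      linarith
    have hC0 : 0 ≤ C := by
      have := (abs_nonneg _).trans (hC 0 le_rfl)
      simpa using this
    have hgb : ∀ t ≥ 0, Real.exp (a * t) * |g.1 t| ≤ C * Real.exp ((a - η) * t) := by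
      intro t ht
      have h1 : |g.1 t| ≤ C * Real.exp (-η * t) := by
        refine (hC t ht).trans (mul_le_mul_of_nonneg_left ?_ hC0)
        apply Real.exp_le_exp.2
        have : η ≤ δ := min_le_right _ _
        nlinarith
      calc Real.exp (a * t) * |g.1 t| ≤ Real.exp (a * t) * (C * Real.exp (-η * t)) :=
            mul_le_mul_of_nonneg_left h1 (Real.exp_pos _).le
        _ = C * (Real.exp (a * t) * Real.exp (-η * t)) := by ring
        _ = _ := by rw [← Real.exp_add]; ring_nf
    have hE : ∀ t, HasDerivAt (fun t => C / (a - η) * Real.exp ((a - η) * t))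
        (C * Real.exp ((a - η) * t)) t := by
      intro t
      have := ((((hasDerivAt_id t).const_mul (a - η)).exp).const_mul (C / (a - η)))
      refine HasDerivAt.congr_deriv this ?_
      simp only [id]
      field_simp
    have key : ∀ σ : ℝ, |σ| = 1 → ∀ t ≥ 0, σ * (Real.exp (a * t) * f.1 t) ≤
        |f.1 0| + C / (a - η) * Real.exp ((a - η) * t) := by
      intro σ hσ t ht
      have hd : ∀ t, HasDerivAt (fun t => C / (a - η) * Real.exp ((a - η) * t) -
          σ * (Real.exp (a * t) * f.1 t)) (C * Real.exp ((a - η) * t) -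
          σ * (Real.exp (a * t) * g.1 t)) t := fun t =>
        (hE t).sub ((hasDeriv_mul_exp a f t).const_mul σ)
      have hm : MonotoneOn (fun t => C / (a - η) * Real.exp ((a - η) * t) -
          σ * (Real.exp (a * t) * f.1 t)) (Set.Ici 0) := by
        refine monotoneOn_of_deriv_nonneg (convex_Ici 0)
          (fun t _ => (hd t).continuousAt.continuousWithinAt)
          (fun t _ => (hd t).differentiableAt.differentiableWithinAt) ?_
        intro x hx
        rw [interior_Ici] at hx
        rw [(hd x).deriv]
        have h1 := hgb x (le_of_lt hx)
        have h2 : σ * (Real.exp (a * x) * g.1 x) ≤ Real.exp (a * x) * |g.1 x| := by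
          refine (le_abs_self _).trans ?_
          rw [abs_mul, hσ, abs_mul, Real.abs_exp, one_mul]
        linarith
      have := hm (Set.mem_Ici.2 le_rfl) (Set.mem_Ici.2 ht) ht
      simp only [mul_zero, Real.exp_zero, one_mul, mul_one] at this
      have h3 : σ * f.1 0 ≤ |f.1 0| := by
        refine (le_abs_self _).trans ?_
        rw [abs_mul, hσ, one_mul]
      have h4 : 0 ≤ C / (a - η) := by positivity
      linarith
    refine ⟨η, hη, |f.1 0| + C / (a - η), ?_⟩
    intro t ht
    have h1 := key 1 (by simp) t ht
    have h2 := key (-1) (by simp) t ht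
    have h3 : Real.exp (a * t) * |f.1 t| ≤ |f.1 0| + C / (a - η) * Real.exp ((a - η) * t) := by
      rcases abs_cases (f.1 t) with h | h <;> rw [h.1] <;> linarith
    have h4 : 1 ≤ Real.exp ((a - η) * t) := Real.one_le_exp (by positivity)
    have h5 : Real.exp (a * t) * |f.1 t| ≤
        (|f.1 0| + C / (a - η)) * Real.exp ((a - η) * t) := by
      nlinarith [abs_nonneg (f.1 0)]
    have h6 : Real.exp ((a - η) * t) = Real.exp (a * t) * Real.exp (-η * t) := by
      rw [← Real.exp_add]; ring_nf
    rw [h6] at h5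
    have h7 : Real.exp (a * t) * |f.1 t| ≤
        Real.exp (a * t) * ((|f.1 0| + C / (a - η)) * Real.exp (-η * t)) := by linarith
    exact le_of_mul_le_mul_left h7 (Real.exp_pos _)

theorem bdd_VV (M : Multiset ℝ) (hM : ∀ a ∈ M, 0 < a) (f : SM) (hf : f ∈ VV M) :
    ∃ C, ∀ t ≥ 0, |f.1 t| ≤ C := by
  obtain ⟨δ, hδ, C, hC⟩ := decay M hM f hf
  have hC0 : 0 ≤ C := by
    have := (abs_nonneg _).trans (hC 0 le_rfl)
    simpa using this
  refine ⟨C, fun t ht => (hC t ht).trans ?_⟩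
  have : Real.exp (-δ * t) ≤ 1 := Real.exp_le_one_iff.2 (by nlinarith)
  nlinarith

theorem tail_VV (M : Multiset ℝ) (hM : ∀ a ∈ M, 0 < a) (f : SM) (hf : f ∈ VV M) :
    Filter.Tendsto f.1 Filter.atTop (nhds 0) := by
  obtain ⟨δ, hδ, C, hC⟩ := decay M hM f hf
  have h1 : Filter.Tendsto (fun t : ℝ => C * Real.exp (-δ * t)) Filter.atTop (nhds 0) := by
    have : Filter.Tendsto (fun t : ℝ => Real.exp (-δ * t)) Filter.atTop (nhds 0) :=
      Real.tendsto_exp_atBot.comp (Filter.tendsto_id.const_mul_atTop_of_neg (by linarith))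
    simpa using this.const_mul C
  refine squeeze_zero_norm' ?_ h1
  filter_upwards [Filter.eventually_ge_atTop 0] with t ht
  exact hC t ht

theorem ev_pos (e : SM) (h0 : e.1 0 = 0) (h1 : 0 < (DD e).1 0) :
    ∀ᶠ t in nhds (0:ℝ), 0 < t → 0 < e.1 t := by
  have h := (hasDerivAt_iff_tendsto_slope.1 (SM.hasDeriv e 0)).eventually (lt_mem_nhds h1)
  rw [eventually_nhdsWithin_iff] at h
  filter_upwards [h] with t ht htp
  have := ht (by simpa using htp.ne')
  rw [slope_def_field, h0, sub_zero, sub_zero] at this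
  exact (div_pos_iff_of_pos_right htp).1 this

theorem ev_neg (e : SM) (h0 : e.1 0 = 0) (h1 : 0 < (DD e).1 0) :
    ∀ᶠ t in nhds (0:ℝ), t < 0 → e.1 t < 0 := by
  have h := (hasDerivAt_iff_tendsto_slope.1 (SM.hasDeriv e 0)).eventually (lt_mem_nhds h1)
  rw [eventually_nhdsWithin_iff] at h
  filter_upwards [h] with t ht htp
  have := ht (by simpa using htp.ne)
  rw [slope_def_field, h0, sub_zero, sub_zero] at this
  by_contra hcon
  push Not at hcon
  exact absurd this (not_lt.2 (div_nonpos_of_nonneg_of_nonpos hcon htp.le))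

/-- feasibility -/
def Feas (M : Multiset ℝ) (s : ℝ) (f : SM) : Prop :=
  f ∈ VV M ∧ f.1 0 = s ∧ ∀ t ≥ 0, |f.1 t| ≤ 1

/-- optimality -/
def IsOpt (M : Multiset ℝ) (s : ℝ) (q : SM) : Prop :=
  Feas M s q ∧ ∀ f, Feas M s f → (DD f).1 0 ≤ (DD q).1 0

theorem exists_opt (M : Multiset ℝ) (s : ℝ) (p : SM) (hp : Feas M s p) : ∃ q, IsOpt M s q := by
  let Z : Finset ℝ := (Finset.range M.card).image (fun n : ℕ => (n : ℝ))
  have hZ : Z.card = M.card := by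
    rw [Finset.card_image_of_injective _ Nat.cast_injective]; simp
  have hZ0 : ∀ z ∈ Z, 0 ≤ z := by
    intro z hz
    simp only [Z, Finset.mem_image] at hz
    obtain ⟨n, _, rfl⟩ := hz
    positivity
  let E := LinearEquiv.ofBijective (evL M Z) (evL_bij M Z hZ)
  let ev : ℝ → (Z → ℝ) →ₗ[ℝ] ℝ := fun t =>
    { toFun := fun y => (E.symm y).1.1 t
      map_add' := by intro x y; simp
      map_smul' := by intro x y; simp }
  let dv : (Z → ℝ) →ₗ[ℝ] ℝ :=
    { toFun := fun y => (DD (E.symm y).1).1 0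
      map_add' := by intro x y; simp
      map_smul' := by intro x y; simp }
  have hev : ∀ t, Continuous (ev t) := fun t => LinearMap.continuous_of_finiteDimensional _
  have hdv : Continuous dv := LinearMap.continuous_of_finiteDimensional _
  let K : Set (Z → ℝ) := {y | ev 0 y = s} ∩ ⋂ t : ℝ, ⋂ _ : 0 ≤ t, {y | |ev t y| ≤ 1}
  have hKc : IsClosed K := by
    refine (isClosed_eq (hev 0) continuous_const).inter ?_
    exact isClosed_iInter fun t => isClosed_iInter fun _ =>
      isClosed_le (hev t).abs continuous_const
  have hev' : ∀ (z : Z) y, ev z y = y z := by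
    intro z y
    exact congrFun (E.apply_symm_apply y) z
  have hKmem : ∀ y, y ∈ K ↔ Feas M s (E.symm y).1 := by
    intro y
    constructor
    · rintro ⟨h1, h2⟩
      refine ⟨(E.symm y).2, h1, fun t ht => ?_⟩
      have h3 := Set.mem_iInter.1 (Set.mem_iInter.1 h2 t) ht
      exact h3
    · rintro ⟨_, h1, h2⟩
      refine ⟨h1, Set.mem_iInter.2 fun t => Set.mem_iInter.2 fun ht => ?_⟩
      exact h2 t ht
  have hKb : K ⊆ Metric.closedBall 0 1 := by
    intro y hy
    rw [mem_closedBall_zero_iff, pi_norm_le_iff_of_nonneg zero_le_one]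
    intro z
    have := ((hKmem y).1 hy).2.2 z (hZ0 z z.2)
    have h3 := hev' z y
    rw [← h3]
    exact this
  have hKcomp : IsCompact K := (isCompact_closedBall 0 1).of_isClosed_subset hKc hKb
  have hE : ∀ (f : SM) (hf : f ∈ VV M), (E.symm (E ⟨f, hf⟩)).1 = f := by
    intro f hf
    rw [E.symm_apply_apply]
  obtain ⟨y, hy, hmax⟩ := hKcomp.exists_isMaxOn
    ⟨E ⟨p, hp.1⟩, (hKmem _).2 (by rw [hE]; exact hp)⟩ hdv.continuousOn
  refine ⟨(E.symm y).1, (hKmem y).1 hy, ?_⟩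
  intro f hf
  have h1 := hmax ((hKmem (E ⟨f, hf.1⟩)).2 (by rw [hE]; exact hf))
  have h2 : dv (E ⟨f, hf.1⟩) = (DD f).1 0 := by
    change (DD (E.symm (E ⟨f, hf.1⟩)).1).1 0 = _
    rw [hE]
  have h3 : dv (E ⟨f, hf.1⟩) ≤ dv y := h1
  rw [h2] at h3
  exact h3

theorem no_perturb (M : Multiset ℝ) (hM : ∀ a ∈ M, 0 < a) (s : ℝ) (hs : s < 1) (q : SM)
    (hq : IsOpt M s q) (e : SM) (he : e ∈ VV M) (he0 : e.1 0 = 0)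
    (hA : ∀ t > 0, |q.1 t| = 1 → q.1 t * e.1 t < 0) : (DD e).1 0 ≤ 0 := by
  by_contra! hd
  obtain ⟨⟨hqV, hq0, hq1⟩, hopt⟩ := hq
  obtain ⟨C, hC⟩ := bdd_VV M hM e he
  have hqc := SM.cont q
  have hec := SM.cont e
  obtain ⟨R, hR⟩ := Filter.eventually_atTop.1
    ((tail_VV M hM q hqV).eventually (Metric.ball_mem_nhds 0 (by norm_num : (0:ℝ) < 1/2)))
  have hloc : ∀ x ∈ Set.Icc 0 R, ∀ᶠ z : ℝ × ℝ in nhds (0, x),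
      (0 ≤ z.1 → 0 ≤ z.2 → |q.1 z.2 + z.1 * e.1 z.2| ≤ 1) := by
    intro x hx
    have hx0 : 0 ≤ x := hx.1
    have hcont : Continuous (fun z : ℝ × ℝ => q.1 z.2 + z.1 * e.1 z.2) := by fun_prop
    have hcx : Filter.Tendsto (fun z : ℝ × ℝ => q.1 z.2 + z.1 * e.1 z.2) (nhds (0, x))
        (nhds (q.1 x)) := by
      have := hcont.tendsto (0, x)
      simpa using this
    have hsnd : Filter.Tendsto (fun z : ℝ × ℝ => z.2) (nhds (0, x)) (nhds x) :=
      continuous_snd.tendsto (0, x)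
    have hqx := abs_le.1 (hq1 x hx0)
    have hup : ∀ᶠ z : ℝ × ℝ in nhds (0, x),
        (0 ≤ z.1 → 0 ≤ z.2 → q.1 z.2 + z.1 * e.1 z.2 ≤ 1) := by
      rcases hqx.2.lt_or_eq with h | h
      · filter_upwards [hcx.eventually (gt_mem_nhds h)] with z hz _ _ using hz.le
      · have hxp : 0 < x := by
          rcases hx0.lt_or_eq with h' | h'
          · exact h'
          · rw [← h', hq0] at h; linarith
        have h1 := hA x hxp (by rw [h]; simp)
        rw [h, one_mul] at h1
        filter_upwards [hsnd.eventually (hec.continuousAt.eventually (gt_mem_nhds h1))] with z hz hz1 hz2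
        have := (abs_le.1 (hq1 z.2 hz2)).2
        nlinarith
    have hlo : ∀ᶠ z : ℝ × ℝ in nhds (0, x),
        (0 ≤ z.1 → 0 ≤ z.2 → -1 ≤ q.1 z.2 + z.1 * e.1 z.2) := by
      rcases hqx.1.lt_or_eq with h | h
      · filter_upwards [hcx.eventually (lt_mem_nhds h)] with z hz _ _ using hz.le
      · have hev : ∀ᶠ t in nhds x, 0 ≤ t → 0 ≤ e.1 t := by
          rcases hx0.lt_or_eq with h' | h'
          · have h1 := hA x h' (by rw [← h]; simp)
            rw [← h] at h1
            filter_upwards [hec.continuousAt.eventually (lt_mem_nhds (show 0 < e.1 x by linarith))]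
              with t ht _ using ht.le
          · rw [← h']
            filter_upwards [ev_pos e he0 hd] with t ht ht0
            rcases ht0.lt_or_eq with h2 | h2
            · exact (ht h2).le
            · rw [← h2, he0]
        filter_upwards [hsnd.eventually hev] with z hz hz1 hz2
        have := (abs_le.1 (hq1 z.2 hz2)).1
        nlinarith [mul_nonneg hz1 (hz hz2)]
    filter_upwards [hup, hlo] with z h1 h2 h3 h4
    exact abs_le.2 ⟨h2 h3 h4, h1 h3 h4⟩
  have hall := isCompact_Icc.eventually_forall_of_forall_eventually
    (P := fun η t => 0 ≤ η → 0 ≤ t → |q.1 t + η * e.1 t| ≤ 1) hloc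
  have hsm : ∀ᶠ η in nhds (0:ℝ), η * C < 1/2 := by
    have : Filter.Tendsto (fun η : ℝ => η * C) (nhds 0) (nhds 0) := by
      have : Continuous (fun η : ℝ => η * C) := by fun_prop
      simpa using this.tendsto 0
    exact this.eventually (gt_mem_nhds (by norm_num))
  have hpos : ∃ᶠ η in nhds (0:ℝ), 0 < η := by
    have h : ∃ᶠ η in nhdsWithin (0:ℝ) (Set.Ioi 0), 0 < η :=
      (eventually_mem_nhdsWithin (a := (0:ℝ)) (s := Set.Ioi 0)).frequently
    exact h.filter_mono nhdsWithin_le_nhds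
  obtain ⟨η, hη, h1, h2⟩ := (hpos.and_eventually (hall.and hsm)).exists
  have hf : Feas M s (q + η • e) := by
    refine ⟨(VV M).add_mem hqV ((VV M).smul_mem _ he), ?_, ?_⟩
    · simp [hq0, he0]
    · intro t ht
      simp only [Submodule.coe_add, Submodule.coe_smul, Pi.add_apply, Pi.smul_apply, smul_eq_mul]
      rcases le_total t R with h | h
      · exact h1 t ⟨ht, h⟩ hη.le ht
      · have h3 := hR t h
        simp only [dist_zero_right, Real.norm_eq_abs] at h3
        have h4 := hC t ht
        calc |q.1 t + η * e.1 t| ≤ |q.1 t| + |η * e.1 t| := abs_add_le _ _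
          _ = |q.1 t| + η * |e.1 t| := by rw [abs_mul, abs_of_pos hη]
          _ ≤ 1 := by nlinarith
  have := hopt _ hf
  simp at this
  nlinarith

theorem DD_zero_const (M : Multiset ℝ) (hM : ∀ a ∈ M, 0 < a) (f : SM) (hf : f ∈ VV M)
    (h : DD f = 0) : f = 0 := by
  have h1 : ∀ t, f.1 t = f.1 0 := fun t =>
    is_const_of_deriv_eq_zero (SM.diff f) (fun x => by rw [← DD_apply, h]; rfl) t 0
  have h2 := tail_VV M hM f hf
  have h3 : Filter.Tendsto f.1 Filter.atTop (nhds (f.1 0)) := by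
    have : f.1 = fun _ => f.1 0 := funext h1
    rw [this]; exact tendsto_const_nhds
  have h4 := tendsto_nhds_unique h3 h2
  ext t
  rw [h1 t, h4]; rfl

theorem crit (q : SM) (hq1 : ∀ t ≥ 0, |q.1 t| ≤ 1) (t : ℝ) (ht : 0 < t) (h : |q.1 t| = 1) :
    (DD q).1 t = 0 := by
  rcases (abs_eq zero_le_one).1 h with h | h
  · refine IsLocalMax.hasDerivAt_eq_zero ?_ (SM.hasDeriv q t)
    filter_upwards [lt_mem_nhds ht] with x hx
    rw [h]; exact (abs_le.1 (hq1 x hx.le)).2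
  · refine IsLocalMin.hasDerivAt_eq_zero ?_ (SM.hasDeriv q t)
    filter_upwards [lt_mem_nhds ht] with x hx
    rw [h]; exact (abs_le.1 (hq1 x hx.le)).1

theorem opt_struct (M : Multiset ℝ) (hM : ∀ a ∈ M, 0 < a) (hM0 : M ≠ 0) (s : ℝ) (hs : s < 1) (q : SM)
    (hq : IsOpt M s q) : ∃ A : Finset ℝ, A.card + 1 = M.card ∧ (∀ t ∈ A, 0 < t) ∧
      (∀ t ∈ A, |q.1 t| = 1) ∧ (∀ t ∈ A, (DD q).1 t = 0) ∧
      ∀ e ∈ VV M, e.1 0 = 0 → (∀ t ∈ A, q.1 t * e.1 t ≤ 0) → (DD e).1 0 ≤ 0 := by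
  have hMc : 0 < M.card := Multiset.card_pos.2 hM0
  let S : Set ℝ := {t | 0 < t ∧ |q.1 t| = 1}
  have hfin : ∀ B : Finset ℝ, (B : Set ℝ) ⊆ S → B.card < M.card := by
    intro B hB
    by_contra! hc
    have hz : ∀ z ∈ B, (DD q).1 z = 0 := fun z hz =>
      crit q hq.1.2.2 z (hB hz).1 (hB hz).2
    have h1 := DD_zero_const M hM q hq.1.1 (zero_count M _ (DD_mem hq.1.1) B hc hz)
    obtain ⟨z, hz⟩ : B.Nonempty := by rw [← Finset.card_pos]; omega
    have := (hB hz).2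
    rw [h1] at this
    simp at this
  have hSf : S.Finite := by
    by_contra hinf
    obtain ⟨B, hB, hc⟩ := Set.Infinite.exists_subset_card_eq hinf M.card
    exact absurd (hfin B hB) (by omega)
  let A := hSf.toFinset
  have hAm : ∀ t, t ∈ A ↔ 0 < t ∧ |q.1 t| = 1 := fun t => by
    rw [Set.Finite.mem_toFinset]; rfl
  have hAlt : A.card < M.card := hfin A (by simp [A])
  have h0A : (0:ℝ) ∉ A := fun h => lt_irrefl _ ((hAm 0).1 h).1
  have hins : (insert 0 A).card = A.card + 1 := Finset.card_insert_of_notMem h0A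
  obtain ⟨e0, he0, he0'⟩ := interp M (insert 0 A) (by omega) (fun t => if t = 0 then 0 else - q.1 t)
  have he00 : e0.1 0 = 0 := by rw [he0' 0 (by simp)]; simp
  have he0A : ∀ t ∈ A, e0.1 t = - q.1 t := by
    intro t ht
    rw [he0' t (by simp [ht]), if_neg ((hAm t).1 ht).1.ne']
  have hsq : ∀ t ∈ A, q.1 t * q.1 t = 1 := by
    intro t ht
    rw [← abs_mul_abs_self, ((hAm t).1 ht).2, one_mul]
  have hcard : A.card + 1 = M.card := by
    by_contra hne
    obtain ⟨Z, hZ, hZc⟩ := Infinite.exists_superset_card_eq (insert 0 A) M.card (by omega)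
    obtain ⟨x, hxZ, hx⟩ := Finset.exists_mem_notMem_of_card_lt_card
      (show (insert 0 A).card < Z.card by omega)
    obtain ⟨g, hg, hg'⟩ := interp M Z hZc.le (fun t => if t = x then 1 else 0)
    have h0Z : (0:ℝ) ∈ Z := hZ (by simp)
    have hx0 : x ≠ 0 := fun h => hx (by simp [h])
    have hg0 : g.1 0 = 0 := by rw [hg' 0 h0Z, if_neg hx0.symm]
    have hgd : (DD g).1 0 ≠ 0 := by
      intro hgd
      have := zero_count' M g hg (Z.erase x) (by rw [Finset.card_erase_of_mem hxZ]; omega) hM0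
        (by
          intro z hz
          rw [hg' z (Finset.mem_of_mem_erase hz), if_neg (Finset.ne_of_mem_erase hz)]) 0
        (Finset.mem_erase.2 ⟨hx0.symm, h0Z⟩) hgd
      have h1 := hg' x hxZ
      rw [this] at h1
      simp at h1
    have := no_perturb M hM s hs q hq (e0 + ((1 - (DD e0).1 0) / (DD g).1 0) • g)
      ((VV M).add_mem he0 ((VV M).smul_mem _ hg)) (by simp [he00, hg0]) (by
        intro t ht1 ht2
        have htA : t ∈ A := (hAm t).2 ⟨ht1, ht2⟩
        have htx : t ≠ x := fun h => hx (by simp [← h, htA])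
        have : g.1 t = 0 := by
          rw [hg' t (hZ (by simp [htA])), if_neg htx]
        simp [this, he0A t htA, hsq t htA])
    simp at this
    rw [div_mul_cancel₀ _ hgd] at this
    linarith
  refine ⟨A, hcard, fun t ht => ((hAm t).1 ht).1, fun t ht => ((hAm t).1 ht).2,
    fun t ht => crit q hq.1.2.2 t ((hAm t).1 ht).1 ((hAm t).1 ht).2, ?_⟩
  intro e he he0 heA
  by_contra! hd
  have hpt : ∀ δ > 0, (DD e).1 0 + δ * (DD e0).1 0 ≤ 0 := by
    intro δ hδ
    have := no_perturb M hM s hs q hq (e + δ • e0)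
      ((VV M).add_mem ‹_› ((VV M).smul_mem _ ‹_›)) (by simp [he00, he0]) (by
        intro t ht1 ht2
        have htA : t ∈ A := (hAm t).2 ⟨ht1, ht2⟩
        have h1 := heA t htA
        have h2 := hsq t htA
        simp only [Submodule.coe_add, Submodule.coe_smul, Pi.add_apply, Pi.smul_apply, smul_eq_mul,
          he0A t htA]
        nlinarith)
    simpa using this
  have h1 := hpt ((DD e).1 0 / (2 * (|(DD e0).1 0| + 1))) (by positivity)
  have h2 : -( (DD e).1 0 / 2) ≤ (DD e).1 0 / (2 * (|(DD e0).1 0| + 1)) * (DD e0).1 0 := by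
    have h3 : (DD e).1 0 / (2 * (|(DD e0).1 0| + 1)) * (|(DD e0).1 0| + 1) = (DD e).1 0 / 2 := by
      field_simp
    have h4 : 0 < (DD e).1 0 / (2 * (|(DD e0).1 0| + 1)) := by positivity
    have h5 := neg_abs_le ((DD e0).1 0)
    nlinarith
  linarith

theorem opt_sign (b : ℝ) (L : Multiset ℝ) (hM : ∀ a ∈ b ::ₘ L, 0 < a) (hL : L ≠ 0) (s : ℝ)
    (hs : s < 1) (p : SM) (hp : IsOpt (b ::ₘ L) s p) :
    ∃ c : ℝ, Op L p = c • Ex b ∧ 0 < c * (-1) ^ (L.card + 1) := by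
  have hb : 0 < b := hM b (by simp)
  obtain ⟨A, hAc, hA0, hA1, hAd, hopt⟩ := opt_struct _ hM (by simp) s hs p hp
  have hpV := hp.1.1
  have hker := hpV
  rw [mem_VV, Op_cons'] at hker
  have hc := ker_T b _ hker
  set c := (Op L p).1 0 with hcdef
  refine ⟨c, hc, ?_⟩
  rw [Multiset.card_cons] at hAc
  have hLc : 0 < L.card := Multiset.card_pos.2 hL
  have hAne : A.Nonempty := by rw [← Finset.card_pos]; omega
  set τ := A.min' hAne with hτ
  have hτA : τ ∈ A := A.min'_mem hAne
  have hτ0 := hA0 τ hτA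
  have h0A : (0:ℝ) ∉ A := fun h => lt_irrefl _ (hA0 0 h)
  have hτ1 : p.1 τ = 1 := by
    rcases (abs_eq zero_le_one).1 (hA1 τ hτA) with h | h
    · exact h
    · exfalso
      obtain ⟨e, he, he'⟩ := interp (b ::ₘ L) (insert 0 A)
        (by rw [Finset.card_insert_of_notMem h0A, Multiset.card_cons]; omega)
        (fun t => if t = τ then 1 else 0)
      have heτ : e.1 τ = 1 := by rw [he' τ (by simp [hτA])]; simp
      have hez : ∀ t ∈ (insert 0 A).erase τ, e.1 t = 0 := by
        intro t ht
        rw [he' t (Finset.mem_of_mem_erase ht), if_neg (Finset.ne_of_mem_erase ht)]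
      have h0m : (0:ℝ) ∈ (insert 0 A).erase τ := Finset.mem_erase.2 ⟨hτ0.ne, by simp⟩
      have he0 := hez 0 h0m
      have hcard : ((insert 0 A).erase τ).card = L.card := by
        rw [Finset.card_erase_of_mem (by simp [hτA]), Finset.card_insert_of_notMem h0A]; omega
      have hne : e ≠ 0 := fun h => by rw [h] at heτ; simp at heτ
      have h1 := hopt e he he0 (by
        intro t ht
        by_cases htτ : t = τ
        · rw [htτ, h, heτ]; norm_num
        · rw [hez t (Finset.mem_erase.2 ⟨htτ, by simp [ht]⟩), mul_zero])
      have h2 : (DD e).1 0 ≠ 0 := fun hd => hne (zero_count' _ e he _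
        (by rw [Multiset.card_cons, hcard]) (by simp) hez 0 h0m hd)
      have h3 : (DD e).1 0 < 0 := lt_of_le_of_ne h1 h2
      have h4 := ev_pos (-e) (by simp [he0]) (by simpa using h3)
      have h5 : ∃ᶠ t in nhds (0:ℝ), 0 < t := by
        have h : ∃ᶠ η in nhdsWithin (0:ℝ) (Set.Ioi 0), 0 < η :=
          (eventually_mem_nhdsWithin (a := (0:ℝ)) (s := Set.Ioi 0)).frequently
        exact h.filter_mono nhdsWithin_le_nhds
      obtain ⟨x, hx0, hx1, hx2⟩ := (h5.and_eventually (h4.and (gt_mem_nhds hτ0))).exists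
      have hx3 := hx1 hx0
      have hx4 : e.1 x < 0 := by simpa using hx3
      obtain ⟨y, hy, hy0⟩ := intermediate_value_Icc hx2.le (SM.cont e).continuousOn
        (show (0:ℝ) ∈ Set.Icc (e.1 x) (e.1 τ) from ⟨hx4.le, by rw [heτ]; norm_num⟩)
      have hyτ : y < τ := lt_of_le_of_ne hy.2 (fun h => by rw [h, heτ] at hy0; norm_num at hy0)
      have hym : y ∉ (insert 0 A).erase τ := by
        intro hm
        have := Finset.mem_of_mem_erase hm
        rcases Finset.mem_insert.1 this with h | h
        · linarith [hy.1]
        · exact absurd (A.min'_le y h) (not_le.2 hyτ)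
      refine hne (zero_count _ e he (insert y ((insert 0 A).erase τ)) ?_ ?_)
      · rw [Finset.card_insert_of_notMem hym, hcard, Multiset.card_cons]
      · intro z hz
        rcases Finset.mem_insert.1 hz with rfl | hz
        · exact hy0
        · exact hez z hz
  obtain ⟨x, hx, hx'⟩ := exists_hasDerivAt_eq_slope p.1 (DD p).1 hτ0
    (SM.cont p).continuousOn (fun t _ => SM.hasDeriv p t)
  have hxp : 0 < (DD p).1 x := by
    rw [hx', hτ1, hp.1.2.1, sub_zero]
    exact div_pos (by linarith) hτ0
  have hOp : Op L (DD p) = (-(b * c)) • Ex b := by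
    rw [Op_DD, hc, map_smul, DD_Ex, smul_smul]
    congr 1
    ring
  have hc0 : c ≠ 0 := by
    intro h
    have h1 := zero_count L (DD p) (by rw [hOp, h]; simp) A (by omega) hAd
    rw [h1] at hxp
    simp at hxp
  have h1 := sign_left b (-(b * c)) (neg_ne_zero.2 (mul_ne_zero hb.ne' hc0)) L (DD p) hOp A
    (by omega) hAd x (fun z hz => hx.2.trans_le (A.min'_le z hz))
  have h2 : -(b * c) * (DD p).1 x * (-1) ^ L.card = (b * (DD p).1 x) * (c * (-1) ^ (L.card + 1)) := by
    rw [pow_succ]; ring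
  rw [h2] at h1
  exact (mul_pos_iff_of_pos_left (mul_pos hb hxp)).1 h1

theorem step (b : ℝ) (L : Multiset ℝ) (hM : ∀ a ∈ b ::ₘ L, 0 < a) (hb1 : b ≤ 1) (hL : L ≠ 0) (s : ℝ)
    (hs : s < 1) (p q : SM) (hp : IsOpt (b ::ₘ L) s p) (hq : IsOpt ((1:ℝ) ::ₘ L) s q) :
    (DD p).1 0 ≤ (DD q).1 0 := by
  obtain ⟨c, hc, hcs⟩ := opt_sign b L hM hL s hs p hp
  have hM' : ∀ a ∈ (1:ℝ) ::ₘ L, 0 < a := by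
    intro a ha
    rcases Multiset.mem_cons.1 ha with rfl | ha
    · exact one_pos
    · exact hM a (by simp [ha])
  obtain ⟨A, hAc, hA0, hA1, hAd, hopt⟩ := opt_struct _ hM' (by simp) s hs q hq
  have h0A : (0:ℝ) ∉ A := fun h => lt_irrefl _ (hA0 0 h)
  have hcard : (insert 0 A).card = ((1:ℝ) ::ₘ L).card := by
    rw [Finset.card_insert_of_notMem h0A]; omega
  obtain ⟨w, hw, hw'⟩ := interp ((1:ℝ) ::ₘ L) (insert 0 A) hcard.le p.1
  have hw0 : w.1 0 = s := by rw [hw' 0 (by simp), hp.1.2.1]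
  have h1 : (DD w).1 0 ≤ (DD q).1 0 := by
    have := hopt (w - q) ((VV _).sub_mem hw hq.1.1) (by simp [hw0, hq.1.2.1]) (by
      intro t ht
      have h1 := abs_le.1 (hp.1.2.2 t (hA0 t ht).le)
      simp only [Submodule.coe_sub, Pi.sub_apply, hw' t (by simp [ht] : t ∈ insert 0 A)]
      rcases (abs_eq zero_le_one).1 (hA1 t ht) with h | h <;> rw [h] <;> linarith)
    simpa using this
  refine le_trans ?_ h1
  have hz : ∀ z ∈ insert 0 A, (p - w).1 z = 0 := by
    intro z hz
    simp [hw' z hz]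
  have hOp : Op ((1:ℝ) ::ₘ L) (p - w) = (c * (1 - b)) • Ex b := by
    rw [map_sub, (mem_VV.1 hw), sub_zero, Op_cons', hc, map_smul, DD_Ex]
    module
  by_cases h0 : c * (1 - b) = 0
  · rw [h0, zero_smul] at hOp
    have := zero_count _ _ hOp _ hcard.ge hz
    rw [sub_eq_zero.1 this]
  · by_contra! hlt
    have h4 := ev_neg (p - w) (hz 0 (by simp)) (by simpa using hlt)
    have h5 : ∃ᶠ t in nhds (0:ℝ), t < 0 := by
      have h : ∃ᶠ η in nhdsWithin (0:ℝ) (Set.Iio 0), η < 0 :=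
        (eventually_mem_nhdsWithin (a := (0:ℝ)) (s := Set.Iio 0)).frequently
      exact h.filter_mono nhdsWithin_le_nhds
    obtain ⟨x, hx0, hx1⟩ := (h5.and_eventually h4).exists
    have hx2 := hx1 hx0
    have h6 := sign_left b _ h0 _ _ hOp _ hcard hz x (by
      intro z hz
      rcases Finset.mem_insert.1 hz with rfl | hz
      · exact hx0
      · exact hx0.trans (hA0 z hz))
    rw [Multiset.card_cons] at h6
    have h7 : c * (1 - b) * (p - w).1 x * (-1) ^ (L.card + 1) =
      ((1 - b) * (p - w).1 x) * (c * (-1) ^ (L.card + 1)) := by ring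
    rw [h7] at h6
    have h8 := (pos_iff_pos_of_mul_pos h6).2 hcs
    nlinarith

theorem feas_one (L : Multiset ℝ) (s : ℝ) (hs : |s| ≤ 1) : Feas ((1:ℝ) ::ₘ L) s (s • Ex 1) := by
  refine ⟨?_, by simp [Ex_apply], ?_⟩
  · rw [mem_VV, map_smul, Op_cons, DD_Ex]
    simp
  · intro t ht
    simp only [Submodule.coe_smul, Pi.smul_apply, Ex_apply, smul_eq_mul, abs_mul, Real.abs_exp]
    have : Real.exp (-1 * t) ≤ 1 := Real.exp_le_one_iff.2 (by linarith)
    have := Real.exp_pos (-1 * t)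
    nlinarith [abs_nonneg s]

theorem chain (s : ℝ) (hs : s < 1) (N : Multiset ℝ) : (∀ a ∈ N, 0 < a ∧ a ≤ 1) → ∀ (k : ℕ),
    2 ≤ N.card + k → ∀ p, Feas (N + Multiset.replicate k 1) s p →
    ∃ q, Feas (Multiset.replicate (N.card + k) 1) s q ∧ (DD p).1 0 ≤ (DD q).1 0 := by
  induction N using Multiset.induction_on with
  | empty =>
    intro _ k _ p hp
    exact ⟨p, by simpa using hp, le_rfl⟩
  | cons b N ih =>
    intro hN k hk p hp
    rw [Multiset.card_cons] at hk
    rw [Multiset.cons_add] at hp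
    have hM : ∀ a ∈ b ::ₘ (N + Multiset.replicate k 1), 0 < a := by
      intro a ha
      rcases Multiset.mem_cons.1 ha with rfl | ha
      · exact (hN a (by simp)).1
      · rcases Multiset.mem_add.1 ha with ha | ha
        · exact (hN a (by simp [ha])).1
        · rw [Multiset.eq_of_mem_replicate ha]; exact one_pos
    have hL : N + Multiset.replicate k 1 ≠ 0 := by
      rw [← Multiset.card_pos, Multiset.card_add, Multiset.card_replicate]
      omega
    obtain ⟨p', hp'⟩ := exists_opt _ s p hp
    have hs1 : |s| ≤ 1 := by
      have := hp.2.2 0 le_rfl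
      rwa [hp.2.1] at this
    obtain ⟨q, hq⟩ := exists_opt _ s _ (feas_one (N + Multiset.replicate k 1) s hs1)
    have h1 := step b _ hM (hN b (by simp)).2 hL s hs p' q hp' hq
    have hq1 := hq.1
    have heq : (1:ℝ) ::ₘ (N + Multiset.replicate k 1) = N + Multiset.replicate (k + 1) 1 := by
      rw [Multiset.replicate_succ, Multiset.add_cons]
    rw [heq] at hq1
    obtain ⟨r, hr, hr'⟩ := ih (fun a ha => hN a (by simp [ha])) (k + 1) (by omega) q hq1
    refine ⟨r, ?_, (hp'.2 p hp).trans (h1.trans hr')⟩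
    have : (b ::ₘ N).card + k = N.card + (k + 1) := by rw [Multiset.card_cons]; omega
    rw [this]; exact hr

/-- monomials times exponentials -/
noncomputable def Mo (m : ℕ) (b : ℝ) : SM :=
  ⟨fun t => t ^ m * Real.exp (-b * t), by
    change ContDiff ℝ (⊤ : ℕ∞) (fun t : ℝ => t ^ m * Real.exp (-b * t))
    fun_prop⟩

theorem Mo_apply (m : ℕ) (b t : ℝ) : (Mo m b).1 t = t ^ m * Real.exp (-b * t) := rfl

theorem DD_Mo (m : ℕ) (b : ℝ) : DD (Mo (m+1) b) + b • Mo (m+1) b = ((m : ℝ) + 1) • Mo m b := by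
  ext t
  have h1 : HasDerivAt (fun t => Real.exp (-b * t)) (Real.exp (-b*t) * (-b * 1)) t :=
    ((hasDerivAt_id t).const_mul (-b)).exp
  have h2 := (hasDerivAt_pow (m+1) t).mul h1
  have h3 : (DD (Mo (m+1) b)).1 t = _ := h2.deriv
  simp only [Submodule.coe_add, Submodule.coe_smul, Pi.add_apply, Pi.smul_apply, smul_eq_mul]
  rw [h3, Mo_apply, Mo_apply]
  push_cast
  ring

theorem DD_Mo0 (b : ℝ) : DD (Mo 0 b) + b • Mo 0 b = 0 := by
  have : Mo 0 b = Ex b := by ext t; simp [Mo_apply, Ex_apply]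
  rw [this, DD_Ex]
  module

theorem Op_Mo (b : ℝ) (m : ℕ) : Op (Multiset.replicate (m+1) b) (Mo m b) = 0 := by
  induction m with
  | zero => rw [Multiset.replicate_succ, Op_cons, DD_Mo0, map_zero]
  | succ m ih => rw [Multiset.replicate_succ, Op_cons, DD_Mo, map_smul, ih, smul_zero]

theorem Op_le {M N : Multiset ℝ} (h : M ≤ N) (f : SM) (hf : Op M f = 0) : Op N f = 0 := by
  obtain ⟨K, rfl⟩ := Multiset.le_iff_exists_add.1 h
  rw [add_comm]
  induction K using Multiset.induction_on with
  | empty => simpa using hf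
  | cons a K ih => 
    rw [Multiset.cons_add, Op_cons', ih (by simp)]
    simp

theorem expPoly_sub (d : ℕ) (h : Fin d → ℝ) (p : ℝ → ℝ) (hp : p ∈ expPoly d h) :
    ∃ f : SM, f.1 = p ∧ f ∈ VV (Multiset.map h Finset.univ.val) := by
  obtain ⟨c, hc⟩ := hp
  refine ⟨∑ i, c i • Mo (Nat.card {j : Fin d // j < i ∧ h j = h i}) (h i), ?_, ?_⟩
  · funext t
    rw [hc]
    simp [Mo_apply, mul_assoc]
  · refine Submodule.sum_mem _ fun i _ => Submodule.smul_mem _ _ ?_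
    rw [mem_VV]
    refine Op_le ?_ _ (Op_Mo _ _)
    rw [← Multiset.le_count_iff_replicate_le, Multiset.count_map, Nat.card_eq_fintype_card,
      Fintype.card_subtype]
    have : (Multiset.filter (fun a => h i = h a) Finset.univ.val).card =
      (Finset.univ.filter (fun a => h i = h a)).card := rfl
    rw [this, Nat.add_one_le_iff]
    apply Finset.card_lt_card
    rw [Finset.ssubset_iff_of_subset]
    · exact ⟨i, by simp, by simp⟩
    · intro j hj
      simp at hj ⊢
      exact hj.2.symm

theorem ones_sub (d : ℕ) : ∀ f : SM, Op (Multiset.replicate d 1) f = 0 →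
    ∃ c : ℕ → ℝ, f = ∑ i ∈ Finset.range d, c i • Mo i 1 := by
  induction d with
  | zero => 
    intro f hf
    exact ⟨0, by simpa [Op_zero] using hf⟩
  | succ d ih =>
    intro f hf
    rw [Multiset.replicate_succ, Op_cons] at hf
    obtain ⟨c, hc⟩ := ih _ hf
    have h1 : DD (f - ∑ i ∈ Finset.range d, (c i / (i + 1)) • Mo (i+1) 1) +
      (1:ℝ) • (f - ∑ i ∈ Finset.range d, (c i / (i + 1)) • Mo (i+1) 1) = 0 := by
      have h2 : DD (∑ i ∈ Finset.range d, (c i / ((i:ℝ) + 1)) • Mo (i+1) 1) +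
        (1:ℝ) • (∑ i ∈ Finset.range d, (c i / ((i:ℝ) + 1)) • Mo (i+1) 1) =
          ∑ i ∈ Finset.range d, c i • Mo i 1 := by
        rw [map_sum, Finset.smul_sum, ← Finset.sum_add_distrib]
        refine Finset.sum_congr rfl fun i _ => ?_
        have h3 := DD_Mo i 1
        rw [map_smul, smul_comm (1:ℝ), ← smul_add, h3, smul_smul, div_mul_cancel₀]
        positivity
      rw [map_sub, smul_sub]
      rw [← h2] at hc
      have : ∀ a b x y : SM, a + b = x + y → a - x + (b - y) = 0 := by
        intro a b x y h
        have : a - x + (b - y) = (a + b) - (x + y) := by abel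
        rw [this, h, sub_self]
      exact this _ _ _ _ hc
    have h4 := ker_T _ _ h1
    have hE : Ex 1 = Mo 0 1 := by ext t; simp [Mo_apply, Ex_apply]
    set y := (f - ∑ i ∈ Finset.range d, (c i / ((i:ℝ) + 1)) • Mo (i+1) 1).1 0
    refine ⟨fun i => if i = 0 then y else c (i-1) / i, ?_⟩
    rw [Finset.sum_range_succ']
    simp only [if_true]
    rw [sub_eq_iff_eq_add, hE, add_comm] at h4
    rw [h4]
    congr 1
    refine Finset.sum_congr rfl fun i _ => ?_
    simp

theorem ones_mem (d : ℕ) (f : SM) (hf : Op (Multiset.replicate d 1) f = 0) :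
    f.1 ∈ expPoly d (fun _ => (1:ℝ)) := by
  obtain ⟨c, hc⟩ := ones_sub d f hf
  refine ⟨fun i => c i, fun t => ?_⟩
  rw [hc, ← Fin.sum_univ_eq_sum_range (fun i => c i • Mo i 1)]
  simp only [AddSubmonoidClass.coe_finsetSum, Finset.sum_apply, Submodule.coe_smul, Pi.smul_apply,
    smul_eq_mul, Mo_apply]
  refine Finset.sum_congr rfl fun i _ => ?_
  have : Nat.card {j : Fin d // j < i ∧ True} = i := by
    rw [Nat.card_eq_fintype_card, Fintype.card_subtype]
    have h2 : Finset.univ.filter (fun j : Fin d => j < i ∧ True) = Finset.Iio i := by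
      ext j; simp
    rw [h2, Fin.card_Iio]
  rw [this]
  ring

theorem compare_s16 (d : ℕ) (hd : 1 ≤ d) (ε : ℝ) (hε : 0 < ε)
    (h : Fin d → ℝ) (hpos : ∀ i, 0 < h i) (hone : ∀ i, h i ≤ 1) (p : ℝ → ℝ) (hp : p ∈ expPoly d h)
    (hp1 : ∀ t ≥ 0, |p t| ≤ 1) (hpe : ε * p 0 < deriv p 0) :
    ∃ q ∈ expPoly d (fun _ => (1:ℝ)), (∀ t ≥ 0, |q t| ≤ 1) ∧ q 0 = p 0 ∧ deriv p 0 ≤ deriv q 0 := by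
  obtain ⟨f, rfl, hf⟩ := expPoly_sub d h p hp
  have hMc : (Multiset.map h Finset.univ.val).card = d := by simp
  rcases hd.lt_or_eq with hd2 | hd1
  · have hs : f.1 0 < 1 := by
      refine lt_of_le_of_ne (abs_le.1 (hp1 0 le_rfl)).2 ?_
      intro h1
      rw [h1, mul_one] at hpe
      have h2 : 0 < (DD (f - Mo 0 0)).1 0 := by
        have h3 : DD (Mo 0 0) = 0 := by simpa using DD_Mo0 0
        rw [map_sub, h3, sub_zero]
        exact hε.trans hpe
      have h4 := ev_pos (f - Mo 0 0) (by simp [Mo_apply, h1]) h2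
      have h5 : ∃ᶠ t in nhds (0:ℝ), 0 < t := by
        have h : ∃ᶠ η in nhdsWithin (0:ℝ) (Set.Ioi 0), 0 < η :=
          (eventually_mem_nhdsWithin (a := (0:ℝ)) (s := Set.Ioi 0)).frequently
        exact h.filter_mono nhdsWithin_le_nhds
      obtain ⟨x, hx0, hx1⟩ := (h5.and_eventually h4).exists
      have hx2 := hx1 hx0
      simp [Mo_apply] at hx2
      linarith [(abs_le.1 (hp1 x hx0.le)).2]
    obtain ⟨q, hq, hq'⟩ := chain (f.1 0) hs (Multiset.map h Finset.univ.val) (by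
      intro a ha
      obtain ⟨i, _, rfl⟩ := Multiset.mem_map.1 ha
      exact ⟨hpos i, hone i⟩) 0 (by rw [hMc]; omega) f (by
        rw [Multiset.replicate_zero, add_zero]
        exact ⟨hf, rfl, hp1⟩)
    rw [hMc, add_zero] at hq
    exact ⟨q.1, ones_mem d q hq.1, hq.2.2, hq.2.1, hq'⟩
  · subst hd1
    have h1 : Multiset.map h (Finset.univ : Finset (Fin 1)).val = h 0 ::ₘ 0 := by simp
    rw [h1, mem_VV, Op_cons, Op_zero] at hf
    have h2 := ker_T _ _ hf
    have h3 : deriv f.1 0 = - h 0 * f.1 0 := by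
      have := congrArg (fun g : SM => g.1 0) hf
      simp [DD_apply] at this
      linarith
    have hq := feas_one 0 (f.1 0) (hp1 0 le_rfl)
    refine ⟨(f.1 0 • Ex 1 : SM).1, ones_mem 1 _ hq.1, hq.2.2, hq.2.1, ?_⟩
    have h4 : deriv (f.1 0 • Ex 1 : SM).1 0 = - f.1 0 := by
      rw [← DD_apply, map_smul, DD_Ex]
      simp [Ex_apply]
    rw [h4, h3]
    rw [h3] at hpe
    have := hpos 0
    have := hone 0
    have : f.1 0 < 0 := by
      by_contra! hc
      nlinarith [mul_nonneg hε.le hc, mul_nonneg (hpos 0).le hc]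
    nlinarith

theorem supAbs_le {p : ℝ → ℝ} (h : ∀ t ≥ 0, |p t| ≤ 1) : supAbs p ≤ 1 := by
  refine csSup_le ⟨_, 0, Set.mem_Ici.2 le_rfl, rfl⟩ ?_
  rintro _ ⟨t, ht, rfl⟩
  exact h t ht

theorem le_of_supAbs (d : ℕ) (h : Fin d → ℝ) (hpos : ∀ i, 0 < h i) (p : ℝ → ℝ)
    (hp : p ∈ expPoly d h) (hs : supAbs p ≤ 1) : ∀ t ≥ 0, |p t| ≤ 1 := by
  obtain ⟨f, rfl, hf⟩ := expPoly_sub d h p hp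
  obtain ⟨C, hC⟩ := bdd_VV _ (by
      intro a ha
      obtain ⟨i, _, rfl⟩ := Multiset.mem_map.1 ha
      exact hpos i) f hf
  intro t ht
  have hb : BddAbove ((fun t => |f.1 t|) '' Set.Ici (0 : ℝ)) := by
    refine ⟨C, ?_⟩
    rintro _ ⟨x, hx, rfl⟩
    exact hC x hx
  exact le_trans (le_csSup hb ⟨t, ht, rfl⟩) hs

/-- Extremality of the vector of ones: for every `h` with `0 < h₁ ≤ ⋯ ≤ h_d ≤ 1`
and every `ε > 0`, `κ(h, ε) ≥ κ(𝟙, ε)`, i.e. the minimum of `κ(·, ε)` over the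
simplex is attained at `h = (1,…,1)` (where `P_𝟙` is the space of functions
`e^{−t} q(t)` with `q` a polynomial of degree `≤ d − 1`). -/
theorem kappa_min_at_ones (d : ℕ) (hd : 1 ≤ d) (ε : ℝ) (hε : 0 < ε)
    (h : Fin d → ℝ) (hmono : Monotone h) (hpos : ∀ i, 0 < h i) (hone : ∀ i, h i ≤ 1) :
    kappa d (fun _ => (1 : ℝ)) ε ≤ kappa d h ε := by
  unfold kappa
  refine le_csInf ?_ ?_
  · let i0 : Fin d := ⟨0, hd⟩
    have hE : (fun t => -Real.exp (-(h i0) * t)) = (-(Ex (h i0)) : SM).1 := rfl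
    refine ⟨_, fun t => -Real.exp (-(h i0) * t), ?_, ?_, ?_, rfl⟩
    · refine ⟨fun i => if i = i0 then -1 else 0, fun t => ?_⟩
      have : Nat.card {j : Fin d // j < i0 ∧ h j = h i0} = 0 := by
        rw [Nat.card_eq_zero]
        left
        constructor
        rintro ⟨j, hj, _⟩
        exact absurd hj (by simp [i0, Fin.lt_def])
      rw [Finset.sum_eq_single i0]
      · rw [this]; simp
      · intro i _ hi; simp [hi]
      · simp
    · apply supAbs_le
      intro t ht
      rw [abs_neg, Real.abs_exp]
      exact Real.exp_le_one_iff.2 (by nlinarith [hpos i0])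
    · rw [hE, ← DD_apply, map_neg, DD_Ex]
      simp [Ex_apply]
      linarith [hpos i0]
  · rintro y ⟨p, hp, hp1, hpe, rfl⟩
    have hp1' := le_of_supAbs d h hpos p hp hp1
    obtain ⟨q, hq, hq1, hq0, hqd⟩ := compare_s16 d hd ε hε h hpos hone p hp hp1' hpe
    have hqe : ε * q 0 < deriv q 0 := by rw [hq0]; linarith
    refine le_trans (csInf_le ⟨0, ?_⟩ ⟨q, hq, supAbs_le hq1, hqe, rfl⟩) ?_
    · rintro _ ⟨r, hr, hr1, hre, rfl⟩
      have := (abs_le.1 (le_of_supAbs d _ (fun _ => one_pos) r hr hr1 0 le_rfl)).2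
      exact div_nonneg (by linarith) (by linarith)
    · rw [hq0]
      have := (abs_le.1 (hp1' 0 le_rfl)).2
      exact div_le_div_of_nonneg_left (by linarith) (by linarith) (by linarith)
end
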